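/- For q an odd prime power, the sum of the degrees of the irreducible complex characters of GL_k(F_q) equals the number of symmetric matrices in GL_k(F_q). -/

import Mathlib

open CategoryTheory

open Matrix Polynomial

/-!
Transposition is an anti-involution of `GL k F` that sends every element to a conjugate. Hence an
irreducible representation is isomorphic to its dual twisted by transposition, that is, it carries a
nonzero bilinear form for which `gᵀ` is the adjoint of `g`, unique up to scalars and so symmetric or
skew-symmetric. If the form is always symmetric, with Gram matrix `S`, then transposition acts on a
block of `ℂ[GL k F]` by `X ↦ S⁻¹ * Xᵀ * S`, whose trace is the degree of the block, while on the
basis of group elements its trace is the number of symmetric matrices.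

A skew form `B` is excluded by induction on `k`. Choose a maximal subspace for which the unipotent
radical of the stabilizer has nonzero invariants. By maximality the second factor of the Levi
subgroup `GL n × GL j` acts on these invariants cuspidally, so they contain Whittaker vectors for
that factor, on which `GL n` acts. By induction the space of Whittaker vectors carries a nonzero
symmetric form `β` for `GL n`, and `β v w` is a coefficient `B v (x w)` for some endomorphism `x`,
hence an average of such coefficients over `GL n`. As a function of the group element, an averaged
coefficient between Whittaker vectors is invariant under transposition, by a matrix computation that
rests on the symmetry of Hankel matrices and the similarity of a matrix to its transpose. So
skewness of `B` forces `β` to be skew as well, a contradiction.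
-/

section Unitriangular

variable {F : Type*} [Field F] {j : ℕ}

/-- Upper unitriangular matrices: the maximal unipotent subgroup of `GL_j`. -/
def IsUpperUnitriangular (u : Matrix (Fin j) (Fin j) F) : Prop :=
  (∀ i, u i i = 1) ∧ ∀ i l, l < i → u i l = 0

/-- The matrix with ones on the subdiagonal and zeros elsewhere: the nilpotent Jordan block. -/
def subdiagShift : Matrix (Fin j) (Fin j) F :=
  of fun i l ↦ if (l : ℕ) + 1 = i then 1 else 0

/-- The sum of the superdiagonal entries. Composed with an additive character of `F`, it gives the
generic character of the unitriangular group. -/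
def superdiagSum : Matrix (Fin j) (Fin j) F →ₗ[F] F :=
  traceLinearMap (Fin j) F F ∘ₗ LinearMap.mulLeft F subdiagShift

/-- The strictly upper triangular part of a matrix. -/
def strictUpper : Matrix (Fin j) (Fin j) F →ₗ[F] Matrix (Fin j) (Fin j) F where
  toFun u := of fun i l ↦ if i < l then u i l else 0
  map_add' x y := by ext i l; by_cases h : i < l <;> simp [h]
  map_smul' c x := by ext i l; simp

theorem superdiagSum_apply (u : Matrix (Fin j) (Fin j) F) :
    superdiagSum u = (subdiagShift * u).trace := rfl

theorem strictUpper_apply (u : Matrix (Fin j) (Fin j) F) (i l : Fin j) :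
    strictUpper u i l = if i < l then u i l else 0 := rfl

theorem superdiagSum_one : superdiagSum (1 : Matrix (Fin j) (Fin j) F) = 0 := by
  simp [superdiagSum_apply, subdiagShift, trace]

theorem superdiagSum_congr {u v : Matrix (Fin j) (Fin j) F}
    (h : ∀ i l : Fin j, (i : ℕ) + 1 = l → u i l = v i l) : superdiagSum u = superdiagSum v := by
  simp only [superdiagSum_apply, trace, diag, mul_apply]
  refine Finset.sum_congr rfl fun l _ ↦ Finset.sum_congr rfl fun i _ ↦ ?_
  by_cases hil : (i : ℕ) + 1 = l
  · rw [h i l hil]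
  · simp [subdiagShift, hil]

theorem superdiagSum_strictUpper (u : Matrix (Fin j) (Fin j) F) :
    superdiagSum (strictUpper u) = superdiagSum u :=
  superdiagSum_congr fun i l hil ↦ by
    rw [strictUpper_apply, if_pos (Fin.lt_def.2 (by omega))]

theorem superdiagSum_single (i l : Fin j) (c : F) :
    superdiagSum (single i l c) = subdiagShift l i * c := by
  simp [superdiagSum_apply, trace_mul_single]

theorem strictUpper_single {i l : Fin j} (h : i < l) (c : F) :
    strictUpper (single i l c) = single i l c := by
  ext a b
  by_cases hab : i = a ∧ l = b
  · obtain ⟨rfl, rfl⟩ := hab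
    simp [strictUpper_apply, h]
  · simp [strictUpper_apply, hab]

theorem isUpperUnitriangular_one_add_strictUpper (u : Matrix (Fin j) (Fin j) F) :
    IsUpperUnitriangular (1 + strictUpper u) :=
  ⟨fun i ↦ by simp [strictUpper_apply],
    fun i l h ↦ by simp [strictUpper_apply, h.not_gt, one_apply_ne h.ne']⟩

theorem IsUpperUnitriangular.isUnit {u : Matrix (Fin j) (Fin j) F} (hu : IsUpperUnitriangular u) :
    IsUnit u := by
  rw [isUnit_iff_isUnit_det, det_of_isUpperTriangular fun i l h ↦ hu.2 i l h]
  simp [hu.1]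

theorem superdiagSum_eq_apply {u : Matrix (Fin j) (Fin j) F} {p q : Fin j} (hpq : (p : ℕ) + 1 = q)
    (h : ∀ i l : Fin j, (i : ℕ) + 1 = l → l ≠ q → u i l = 0) : superdiagSum u = u p q := by
  have h₁ : superdiagSum u = superdiagSum (single p q (u p q)) := by
    refine superdiagSum_congr fun i l hil ↦ ?_
    by_cases hl : l = q
    · obtain rfl : i = p := Fin.ext (by omega)
      simp [hl]
    · simp [h i l hil hl, Ne.symm hl]
  rw [h₁, superdiagSum_single]
  simp [subdiagShift, hpq]

theorem IsUpperUnitriangular.mul {u v : Matrix (Fin j) (Fin j) F} (hu : IsUpperUnitriangular u)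
    (hv : IsUpperUnitriangular v) : IsUpperUnitriangular (u * v) := by
  refine ⟨fun i ↦ ?_, fun i l hli ↦ ?_⟩
  · rw [mul_apply, Finset.sum_eq_single i _ (by simp), hu.1, hv.1, one_mul]
    intro k _ hk
    rcases lt_or_gt_of_ne hk with h | h
    · rw [hu.2 _ _ h, zero_mul]
    · rw [hv.2 _ _ h, mul_zero]
  · rw [mul_apply]
    refine Finset.sum_eq_zero fun k _ ↦ ?_
    rcases lt_or_ge k i with h | h
    · rw [hu.2 _ _ h, zero_mul]
    · rw [hv.2 _ _ (hli.trans_le h), mul_zero]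

theorem superdiagSum_mul {u v : Matrix (Fin j) (Fin j) F} (hu : IsUpperUnitriangular u)
    (hv : IsUpperUnitriangular v) : superdiagSum (u * v) = superdiagSum u + superdiagSum v := by
  rw [← map_add]
  refine superdiagSum_congr fun i l hil ↦ ?_
  have hne : i ≠ l := fun h ↦ by simp [h] at hil
  rw [mul_apply, Fintype.sum_eq_add i l hne, hu.1, hv.1, one_mul, mul_one, Matrix.add_apply,
    add_comm]
  rintro k ⟨hki, hkl⟩
  rcases lt_or_gt_of_ne hki with h | h
  · rw [hu.2 _ _ h, zero_mul]
  · rw [hv.2 _ _ (by rw [Fin.lt_def] at h ⊢; have := Fin.val_ne_of_ne hkl; omega), mul_zero]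

end Unitriangular

section Hankel

variable {F : Type*} [Field F] {j : ℕ}

/-- Hessenberg matrices with unit subdiagonal; companion matrices are the typical example. -/
def IsUnitHessenberg (T : Matrix (Fin j) (Fin j) F) : Prop :=
  ∀ i l, l < i → T i l = subdiagShift i l

/-- The Krylov matrix of `T`: its columns are the iterates of the first basis vector under `T`. -/
def krylov [NeZero j] (T : Matrix (Fin j) (Fin j) F) : Matrix (Fin j) (Fin j) F :=
  of fun i a ↦ (T ^ (a : ℕ)) i 0

theorem IsUnitHessenberg.pow_apply_zero [NeZero j] {T : Matrix (Fin j) (Fin j) F}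
    (hT : IsUnitHessenberg T) {a : ℕ} {i : Fin j} (hi : a ≤ i) :
    (T ^ a) i 0 = if (i : ℕ) = a then 1 else 0 := by
  induction a generalizing i with
  | zero =>
    rw [pow_zero, one_apply]
    simp only [Fin.ext_iff, Fin.val_zero]
  | succ a ih =>
    rw [pow_succ', mul_apply, Finset.sum_eq_single (⟨a, by omega⟩ : Fin j)]
    · rw [ih le_rfl, hT _ _ (Fin.lt_def.2 (Nat.lt_of_succ_le hi))]
      simp [subdiagShift, eq_comm]
    · intro b _ hb
      rcases lt_or_gt_of_ne (fun h ↦ hb (Fin.ext h) : (b : ℕ) ≠ a) with h | h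
      · rw [hT _ _ (Fin.lt_def.2 (by omega)), subdiagShift, of_apply, if_neg (by omega), zero_mul]
      · rw [ih h.le, if_neg h.ne', mul_zero]
    · simp

theorem IsUnitHessenberg.isUpperUnitriangular_krylov [NeZero j] {T : Matrix (Fin j) (Fin j) F}
    (hT : IsUnitHessenberg T) : IsUpperUnitriangular (krylov T) :=
  ⟨fun _ ↦ (hT.pow_apply_zero le_rfl).trans (if_pos rfl),
    fun _ _ h ↦ (hT.pow_apply_zero h.le).trans (if_neg (Fin.val_ne_of_ne h.ne'))⟩

theorem transpose_krylov_mul_krylov_isSymm [NeZero j] {g T₁ T₂ : Matrix (Fin j) (Fin j) F}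
    (h : g * T₁ = T₂ᵀ * g) : ((krylov T₂)ᵀ * g * krylov T₁).IsSymm := by
  have mul_pow (a : ℕ) : g * T₁ ^ a = (T₂ ^ a)ᵀ * g := by
    induction a with
    | zero => simp
    | succ a ih =>
      rw [pow_succ, ← mul_assoc, ih, mul_assoc, h, ← mul_assoc, ← transpose_mul, ← pow_succ']
  -- the product is a Hankel matrix
  have apply_eq (a b : Fin j) :
      ((krylov T₂)ᵀ * g * krylov T₁) a b = (g * T₁ ^ ((a : ℕ) + b)) 0 0 := by
    rw [pow_add, ← mul_assoc, mul_pow]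
    simp [mul_apply, krylov, -transpose_pow]
  refine IsSymm.ext fun a b ↦ ?_
  rw [apply_eq, apply_eq, add_comm]

theorem exists_forall_eq_trace_mul {n : Type*} [Fintype n] (φ : Matrix n n F →ₗ[F] F) :
    ∃ Z : Matrix n n F, ∀ M, φ M = (Z * M).trace := by
  classical
  let Z : Matrix n n F := of fun i l ↦ φ (single l i 1)
  have h : φ = traceLinearMap n F F ∘ₗ LinearMap.mulLeft F Z := by
    refine Matrix.ext_linearMap F fun i l ↦ LinearMap.ext_ring ?_
    simp [Z, trace_mul_single]
  exact ⟨Z, LinearMap.congr_fun h⟩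

/-- By duality: the hypothesis says that `superdiagSum y - superdiagSum x` factors through
`(strictUpper y)ᵀ * g - g * strictUpper x`; a matrix `Z` representing the factorization
gives `T₁ = Z * g` and `T₂ᵀ = g * Z`. -/
theorem exists_isUnitHessenberg {g : Matrix (Fin j) (Fin j) F}
    (h : ∀ x y, (strictUpper y)ᵀ * g = g * strictUpper x → superdiagSum y = superdiagSum x) :
    ∃ T₁ T₂, IsUnitHessenberg T₁ ∧ IsUnitHessenberg T₂ ∧ g * T₁ = T₂ᵀ * g := by
  let N := Matrix (Fin j) (Fin j) F
  let L : N × N →ₗ[F] N :=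
    (LinearMap.mulRight F g ∘ₗ (transposeLinearEquiv _ _ F F).toLinearMap ∘ₗ strictUpper).coprod
      (-(LinearMap.mulLeft F g ∘ₗ strictUpper))
  let ℓ : N × N →ₗ[F] F := superdiagSum.coprod (-superdiagSum)
  have hℓ : ℓ ∈ (LinearMap.ker L).dualAnnihilator := by
    rw [Submodule.mem_dualAnnihilator]
    rintro ⟨y, x⟩ hyx
    have hL : (strictUpper y)ᵀ * g + -(g * strictUpper x) = 0 := hyx
    simp [ℓ, h x y (by rwa [← sub_eq_add_neg, sub_eq_zero] at hL)]
  rw [← LinearMap.range_dualMap_eq_dualAnnihilator_ker] at hℓ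
  obtain ⟨φ, hφ⟩ := hℓ
  obtain ⟨Z, hZ⟩ := exists_forall_eq_trace_mul φ
  have trace_eq (y x : N) : (Z * ((strictUpper y)ᵀ * g - g * strictUpper x)).trace =
      superdiagSum y - superdiagSum x := by
    rw [← hZ, sub_eq_add_neg, sub_eq_add_neg]
    exact LinearMap.congr_fun hφ (y, x)
  refine ⟨Z * g, (g * Z)ᵀ, fun l i hil ↦ ?_, fun l i hil ↦ ?_, by simp [mul_assoc]⟩
  · have := trace_eq 0 (single i l 1)
    rw [strictUpper_single hil, superdiagSum_single] at this
    simpa [← mul_assoc, trace_mul_single] using this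
  · have := trace_eq (single i l 1) 0
    rw [strictUpper_single hil, superdiagSum_single, map_zero, mul_zero, sub_zero, ← mul_assoc,
      trace_mul_comm, ← mul_assoc, transpose_single, trace_mul_single] at this
    simpa using this

variable {K W : Type*} [Field K] [AddCommGroup W] [Module K W]

theorem superdiagSum_eq_of_equivariant {ψ : AddChar F K} (hψ : ψ ≠ 1)
    {t : Matrix (Fin j) (Fin j) F → W}
    (ht_left : ∀ u z, IsUpperUnitriangular u → t (uᵀ * z) = ψ (superdiagSum u) • t z)
    (ht_right : ∀ u z, IsUpperUnitriangular u → t (z * u) = ψ (superdiagSum u) • t z)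
    {g x y : Matrix (Fin j) (Fin j) F} (hg : t g ≠ 0)
    (hxy : (strictUpper y)ᵀ * g = g * strictUpper x) : superdiagSum y = superdiagSum x := by
  by_contra hne
  refine hψ (AddChar.ext _ _ fun c ↦ ?_)
  let d := superdiagSum y - superdiagSum x
  have hd : d ≠ 0 := sub_ne_zero.2 hne
  have comm : (1 + strictUpper ((c / d) • y))ᵀ * g = g * (1 + strictUpper ((c / d) • x)) := by
    simp [add_mul, mul_add, hxy]
  have ψ_eq : ψ ((c / d) * superdiagSum y) = ψ ((c / d) * superdiagSum x) := by
    apply smul_left_injective K hg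
    have h := congrArg t comm
    rw [ht_left _ _ (isUpperUnitriangular_one_add_strictUpper _),
      ht_right _ _ (isUpperUnitriangular_one_add_strictUpper _)] at h
    simpa [superdiagSum_one, superdiagSum_strictUpper] using h
  rw [← div_mul_cancel₀ c hd, mul_sub, AddChar.map_sub_eq_div, ψ_eq, AddChar.one_apply,
    div_self (AddChar.val_isUnit ψ _).ne_zero]

/-- Equivariance lets one replace `g` by a Hankel matrix in its double coset. -/
theorem apply_transpose_eq_of_equivariant_of_ne_zero {ψ : AddChar F K} (hψ : ψ ≠ 1)
    {t : Matrix (Fin j) (Fin j) F → W}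
    (ht_left : ∀ u z, IsUpperUnitriangular u → t (uᵀ * z) = ψ (superdiagSum u) • t z)
    (ht_right : ∀ u z, IsUpperUnitriangular u → t (z * u) = ψ (superdiagSum u) • t z)
    {g : Matrix (Fin j) (Fin j) F} (hg : t g ≠ 0) : t gᵀ = t g := by
  rcases eq_or_ne j 0 with rfl | hj
  · exact congrArg t (Subsingleton.elim _ _)
  have : NeZero j := ⟨hj⟩
  obtain ⟨T₁, T₂, hT₁, hT₂, hg_comm⟩ := exists_isUnitHessenberg fun x y ↦
    superdiagSum_eq_of_equivariant hψ ht_left ht_right hg (x := x) (y := y)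
  have hk₁ := hT₁.isUpperUnitriangular_krylov
  have hk₂ := hT₂.isUpperUnitriangular_krylov
  have hsymm := congrArg t (transpose_krylov_mul_krylov_isSymm hg_comm).eq
  rw [transpose_mul, transpose_mul, transpose_transpose, ht_left _ _ hk₁, ht_right _ _ hk₂,
    mul_assoc, ht_left _ _ hk₂, ht_right _ _ hk₁, smul_comm] at hsymm
  have hψ₀ (a : F) : ψ a ≠ 0 := (AddChar.val_isUnit ψ a).ne_zero
  exact smul_right_injective _ (hψ₀ _) (smul_right_injective _ (hψ₀ _) hsymm)

theorem apply_transpose_eq_of_equivariant {ψ : AddChar F K} (hψ : ψ ≠ 1)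
    {t : Matrix (Fin j) (Fin j) F → W}
    (ht_left : ∀ u z, IsUpperUnitriangular u → t (uᵀ * z) = ψ (superdiagSum u) • t z)
    (ht_right : ∀ u z, IsUpperUnitriangular u → t (z * u) = ψ (superdiagSum u) • t z)
    (g : Matrix (Fin j) (Fin j) F) : t gᵀ = t g := by
  by_cases hg : t g = 0
  · by_cases hgT : t gᵀ = 0
    · rw [hg, hgT]
    · simpa using (apply_transpose_eq_of_equivariant_of_ne_zero hψ ht_left ht_right hgT).symm
  · exact apply_transpose_eq_of_equivariant_of_ne_zero hψ ht_left ht_right hg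

end Hankel

section TransposeSimilarity

theorem exists_mul_add_mul_pow_eq_pow {R : Type*} [CommRing R] [IsDomain R] [IsPrincipalIdealRing R]
    {p r : R} (hp : Irreducible p) {e : ℕ} (hr : ¬ p ^ (e + 1) ∣ r) :
    ∃ a b, a * r + b * p ^ (e + 1) = p ^ e := by
  obtain ⟨d, hd⟩ := IsPrincipalIdealRing.principal (Ideal.span {r, p ^ (e + 1)})
  have mem_iff : ∀ x, x ∈ Ideal.span {r, p ^ (e + 1)} ↔ d ∣ x := fun x ↦ by
    rw [hd]; exact Ideal.mem_span_singleton
  obtain ⟨i, hi, hassoc⟩ :=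
    (dvd_prime_pow hp.prime _).1 ((mem_iff _).1 (Ideal.subset_span (Set.mem_insert_of_mem _ rfl)))
  have hie : i ≠ e + 1 := by
    rintro rfl
    exact hr (hassoc.symm.dvd.trans ((mem_iff r).1 (Ideal.subset_span (Set.mem_insert _ _))))
  exact Ideal.mem_span_pair.1 ((mem_iff _).2 (hassoc.dvd.trans (pow_dvd_pow p (by omega))))

theorem exists_separating_functional_quotient_pow (F : Type*) {R : Type*} [Field F] [CommRing R]
    [IsDomain R] [IsPrincipalIdealRing R] [Algebra F R] {p : R} (hp : Irreducible p) (e : ℕ) :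
    ∃ l : (R ⧸ Ideal.span {p ^ e}) →ₗ[F] F, ∀ x, (∀ y, l (x * y) = 0) → x = 0 := by
  cases e with
  | zero =>
    have : Subsingleton (R ⧸ Ideal.span {p ^ 0}) := Ideal.Quotient.subsingleton_iff.2 (by simp)
    exact ⟨0, fun x _ ↦ Subsingleton.elim x 0⟩
  | succ e =>
    have hpe : Ideal.Quotient.mk (Ideal.span {p ^ (e + 1)}) (p ^ e) ≠ 0 := by
      rw [Ne, Ideal.Quotient.eq_zero_iff_mem, Ideal.mem_span_singleton,
        pow_dvd_pow_iff hp.ne_zero hp.not_isUnit]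
      omega
    obtain ⟨l, hl⟩ : ∃ l : Module.Dual F (R ⧸ Ideal.span {p ^ (e + 1)}),
        l (Ideal.Quotient.mk _ (p ^ e)) ≠ 0 := by
      rw [← not_forall, Module.forall_dual_apply_eq_zero_iff]
      exact hpe
    refine ⟨l, fun x hx ↦ ?_⟩
    obtain ⟨r, rfl⟩ := Ideal.Quotient.mk_surjective x
    rw [Ideal.Quotient.eq_zero_iff_mem, Ideal.mem_span_singleton]
    by_contra hr
    obtain ⟨a, b, hab⟩ := exists_mul_add_mul_pow_eq_pow hp hr
    refine hl ?_
    rw [← hx (Ideal.Quotient.mk _ a), ← map_mul]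
    refine congrArg l (Ideal.Quotient.eq.2 (Ideal.mem_span_singleton.2 ⟨b, ?_⟩))
    linear_combination -hab

theorem exists_balanced_separatingLeft {F R M : Type*} [Field F] [CommRing R] [IsDomain R]
    [IsPrincipalIdealRing R] [Algebra F R] [AddCommGroup M] [Module R M] [Module F M]
    [IsScalarTower F R M] [Module.Finite R M] (hM : Module.IsTorsion R M) :
    ∃ B : LinearMap.BilinForm F M, B.SeparatingLeft ∧ ∀ (r : R) x y, B (r • x) y = B x (r • y) := by
  classical
  obtain ⟨J, _, p, hp, e, ⟨E⟩⟩ := Module.equiv_directSum_of_isTorsion hM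
  choose l hl using fun i ↦ exists_separating_functional_quotient_pow F (hp i) (e i)
  let π (i : J) : M →ₗ[R] R ⧸ Ideal.span {p i ^ e i} := DirectSum.component R J _ i ∘ₗ E.toLinearMap
  have hπ (z : ∀ i, R ⧸ Ideal.span {p i ^ e i}) : ∃ x, ∀ i, π i x = z i :=
    ⟨E.symm (DFinsupp.equivFunOnFintype.symm z), fun i ↦
      congrFun (congrArg DFunLike.coe (E.apply_symm_apply _)) i⟩
  let B : LinearMap.BilinForm F M := ∑ i, ((LinearMap.mul F _).compr₂ (l i)).compl₁₂
    ((π i).restrictScalars F) ((π i).restrictScalars F)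
  have B_apply x y : B x y = ∑ i, l i (π i x * π i y) := by simp [B]
  refine ⟨B, fun x hx ↦ ?_, fun r x y ↦ ?_⟩
  · have hπx i : π i x = 0 := hl i _ fun y ↦ by
      obtain ⟨w, hw⟩ := hπ (Pi.single i y)
      have := hx w
      rw [B_apply, Finset.sum_eq_single i (fun k _ hk ↦ by simp [hw, hk]) (by simp), hw] at this
      simpa using this
    exact E.map_eq_zero_iff.1 (DFinsupp.ext hπx)
  · simp only [B_apply, map_smul, smul_mul_assoc, mul_smul_comm]

theorem exists_isUnit_mul_eq_transpose_mul {F ι : Type*} [Field F] [Fintype ι] [DecidableEq ι]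
    (A : Matrix ι ι F) : ∃ S : Matrix ι ι F, IsUnit S ∧ S * A = Aᵀ * S := by
  let M := Module.AEval F (ι → F) (toLin' A)
  let of : (ι → F) ≃ₗ[F] M := Module.AEval.of F (ι → F) (toLin' A)
  obtain ⟨B, hB, hBX⟩ := exists_balanced_separatingLeft (F := F)
    (Module.AEval.isTorsion_of_finiteDimensional F (ι → F) (toLin' A))
  let C : LinearMap.BilinForm F (ι → F) := B.compl₁₂ of.toLinearMap of.toLinearMap
  have hC : C.SeparatingLeft := fun x hx ↦ of.map_eq_zero_iff.1
    (hB _ fun y ↦ by simpa [C] using hx (of.symm y))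
  have of_mulVec x : of (A *ᵥ x) = (X : F[X]) • of x := by
    rw [Module.AEval.X_smul_of]; rfl
  have hadj x y : C (A *ᵥ x) y = C x (A *ᵥ y) := by
    simp [C, of_mulVec, hBX]
  have hS : toLinearMap₂' F (LinearMap.toMatrix₂' F C) = C := by simp
  refine ⟨LinearMap.toMatrix₂' F C, ?_, ?_⟩
  · rwa [isUnit_iff_isUnit_det, isUnit_iff_ne_zero,
      ← LinearMap.separatingLeft_toLinearMap₂'_iff_det_ne_zero, hS]
  · exact ((isAdjointPair_toLinearMap₂' (LinearMap.toMatrix₂' F C) (LinearMap.toMatrix₂' F C) A A).1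
      (by rw [hS]; intro x y; simpa using hadj x y)).symm

end TransposeSimilarity

section RankFactorization

variable {F : Type*} [Field F] {l m n : Type*} [Fintype n]

theorem exists_mul_mul_eq_self [Fintype m] (A : Matrix m n F) :
    ∃ R : Matrix n m F, A * R * A = A := by
  classical
  obtain ⟨g, hg⟩ := A.mulVecLin.rangeRestrict.exists_rightInverse_of_surjective
    A.mulVecLin.range_rangeRestrict
  obtain ⟨R, hR⟩ := LinearMap.exists_extend g
  refine ⟨R.toMatrix', ext_of_mulVec_single fun i ↦ ?_⟩
  have hRA (v : n → F) : R (A *ᵥ v) = g (A.mulVecLin.rangeRestrict v) :=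
    LinearMap.congr_fun hR (A.mulVecLin.rangeRestrict v)
  rw [← mulVec_mulVec, ← mulVec_mulVec, LinearMap.toMatrix'_mulVec, hRA]
  exact congrArg Subtype.val (LinearMap.congr_fun hg _)

theorem exists_mul_eq_of_ker_le [Fintype m] {A : Matrix m n F} {E : Matrix l n F}
    (h : ∀ v, A *ᵥ v = 0 → E *ᵥ v = 0) : ∃ Y : Matrix l m F, Y * A = E := by
  classical
  obtain ⟨R, hR⟩ := exists_mul_mul_eq_self A
  refine ⟨E * R, ext_of_mulVec_single fun i ↦ ?_⟩
  let v : n → F := Pi.single i 1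
  have hv : E *ᵥ ((R * A) *ᵥ v - v) = 0 :=
    h _ (by rw [mulVec_sub, mulVec_mulVec, ← Matrix.mul_assoc, hR, sub_self])
  rwa [mulVec_sub, sub_eq_zero, mulVec_mulVec, ← Matrix.mul_assoc] at hv

theorem exists_rank_factorization (A : Matrix m n F) :
    ∃ (r : ℕ) (E : Matrix m (Fin r) F) (B : Matrix (Fin r) n F), E * B = A ∧
      Function.Injective E.mulVecLin ∧
      LinearMap.range E.mulVecLin = LinearMap.range A.mulVecLin := by
  classical
  let e : (Fin (Module.finrank F (LinearMap.range A.mulVecLin)) → F) ≃ₗ[F]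
      LinearMap.range A.mulVecLin := LinearEquiv.ofFinrankEq _ _ (Module.finrank_fin_fun F)
  let φ := (LinearMap.range A.mulVecLin).subtype ∘ₗ e.toLinearMap
  have hφ : (LinearMap.toMatrix' φ).mulVecLin = φ := toLin'_toMatrix' φ
  refine ⟨_, LinearMap.toMatrix' φ,
    LinearMap.toMatrix' (e.symm.toLinearMap ∘ₗ A.mulVecLin.rangeRestrict),
    ext_of_mulVec_single fun i ↦ ?_, ?_, ?_⟩
  · rw [← mulVec_mulVec, LinearMap.toMatrix'_mulVec, LinearMap.toMatrix'_mulVec]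
    simp only [φ, LinearMap.comp_apply, LinearEquiv.coe_coe, LinearEquiv.apply_symm_apply]
    rfl
  · rw [hφ]
    exact Subtype.val_injective.comp e.injective
  · rw [hφ, LinearMap.range_comp_of_range_eq_top _ e.range, Submodule.range_subtype]

theorem exists_inverse_of_bijective [Fintype m] [DecidableEq m] [DecidableEq n] {A : Matrix m n F}
    (hA : Function.Bijective A.mulVecLin) : ∃ P : Matrix n m F, P * A = 1 ∧ A * P = 1 := by
  let L := LinearEquiv.ofBijective A.mulVecLin hA
  have hL : LinearMap.toMatrix' L.toLinearMap = A := LinearMap.toMatrix'_toLin' _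
  refine ⟨LinearMap.toMatrix' L.symm.toLinearMap, ?_, ?_⟩
  · rw [← hL, ← LinearMap.toMatrix'_comp]; simp
  · rw [← hL, ← LinearMap.toMatrix'_comp]; simp

end RankFactorization

section Blocks

variable {F : Type*} [Field F] {κ κ' κ'' : Type*} {j : ℕ}

/-- The block matrix `[[1, X], [0, 1]]`, an element of the unipotent radical of the parabolic
subgroup of `GL (κ ⊕ Fin j)` that stabilizes `F ^ κ`. -/
def shear [DecidableEq κ] (X : Matrix κ (Fin j) F) : Matrix (κ ⊕ Fin j) (κ ⊕ Fin j) F :=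
  fromBlocks 1 X 0 1

/-- The block matrix `diag(h, 1)`, where `h` may be rectangular in order to cover changes of the
index set `κ`. -/
def diagLeft (j : ℕ) (h : Matrix κ κ' F) : Matrix (κ ⊕ Fin j) (κ' ⊕ Fin j) F :=
  fromBlocks h 0 0 1

/-- The block matrix `diag(1, u)`. -/
def diagRight (κ : Type*) [DecidableEq κ] (u : Matrix (Fin j) (Fin j) F) :
    Matrix (κ ⊕ Fin j) (κ ⊕ Fin j) F :=
  fromBlocks 1 0 0 u

/-- The involution exchanging the last two blocks of `(κ ⊕ Fin j) ⊕ Fin j`. -/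
def swapLast [DecidableEq κ] : Matrix ((κ ⊕ Fin j) ⊕ Fin j) ((κ ⊕ Fin j) ⊕ Fin j) F :=
  fromBlocks (fromBlocks 1 0 0 0) (fromRows 0 1) (fromCols 0 1) 0

theorem transpose_diagLeft (h : Matrix κ κ' F) : (diagLeft j h)ᵀ = diagLeft j hᵀ := by
  simp [diagLeft, fromBlocks_transpose]

theorem diagLeft_mul [Fintype κ'] (h : Matrix κ κ' F) (h' : Matrix κ' κ'' F) :
    diagLeft j h * diagLeft j h' = diagLeft j (h * h') := by
  simp [diagLeft, fromBlocks_multiply]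

variable [DecidableEq κ] [DecidableEq κ']

theorem transpose_diagRight (u : Matrix (Fin j) (Fin j) F) :
    (diagRight κ u)ᵀ = diagRight κ uᵀ := by
  simp [diagRight, fromBlocks_transpose]

theorem transpose_swapLast :
    (swapLast : Matrix ((κ ⊕ Fin j) ⊕ Fin j) ((κ ⊕ Fin j) ⊕ Fin j) F)ᵀ = swapLast := by
  simp [swapLast, fromBlocks_transpose, transpose_fromRows, transpose_fromCols]

theorem diagLeft_one : diagLeft j (1 : Matrix κ κ F) = 1 := fromBlocks_one

variable [Fintype κ]

theorem isUnit_diagLeft_iff {h : Matrix κ κ F} : IsUnit (diagLeft j h) ↔ IsUnit h := by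
  simp [isUnit_iff_isUnit_det, diagLeft]

theorem isUnit_of_isUnit_diagLeft_mul_mul [Fintype κ'] {h : Matrix κ' κ F} {h' : Matrix κ κ' F}
    (hh : h * h' = 1) {N : Matrix (κ' ⊕ Fin j) (κ' ⊕ Fin j) F}
    (hN : IsUnit (diagLeft j h' * N * diagLeft j h)) : IsUnit N := by
  obtain ⟨U, hU⟩ := hN.exists_right_inv
  refine .of_mul_eq_one (diagLeft j h * U * diagLeft j h') ?_
  have := congrArg (fun P ↦ diagLeft j h * P * diagLeft j h') hU
  simpa only [← Matrix.mul_assoc, diagLeft_mul, hh, diagLeft_one, Matrix.one_mul,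
    Matrix.mul_one] using this

theorem isUnit_shear (X : Matrix κ (Fin j) F) : IsUnit (shear X) := by
  simp [isUnit_iff_isUnit_det, shear]

theorem isUnit_diagRight_iff {u : Matrix (Fin j) (Fin j) F} :
    IsUnit (diagRight κ u) ↔ IsUnit u := by
  simp [isUnit_iff_isUnit_det, diagRight]

theorem diagLeft_mul_shear [Fintype κ'] (h : Matrix κ' κ F) (X : Matrix κ (Fin j) F) :
    diagLeft j h * shear X = shear (h * X) * diagLeft j h := by
  simp [diagLeft, shear, fromBlocks_multiply]

theorem diagLeft_mul_diagRight [Fintype κ'] (h : Matrix κ' κ F) (u : Matrix (Fin j) (Fin j) F) :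
    diagLeft j h * diagRight κ u = diagRight κ' u * diagLeft j h := by
  simp [diagLeft, diagRight, fromBlocks_multiply]

theorem swapLast_mul_swapLast :
    (swapLast * swapLast : Matrix ((κ ⊕ Fin j) ⊕ Fin j) ((κ ⊕ Fin j) ⊕ Fin j) F) = 1 := by
  ext ((i | i) | i) ((l | l) | l) <;>
    simp [swapLast, one_apply, mul_apply]

theorem diagLeft_shear_mul_swapLast (X : Matrix κ (Fin j) F) :
    diagLeft j (shear X) * swapLast = swapLast * shear (fromRows X 0) := by
  ext ((i | i) | i) ((l | l) | l) <;>
    simp [swapLast, shear, diagLeft, fromBlocks_multiply, fromBlocks_mul_fromRows,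
      fromCols_mul_fromRows]

theorem diagLeft_diagRight_mul_swapLast (u : Matrix (Fin j) (Fin j) F) :
    diagLeft j (diagRight κ u) * swapLast = swapLast * diagRight (κ ⊕ Fin j) u := by
  simp [swapLast, diagRight, diagLeft, fromBlocks_multiply, fromBlocks_mul_fromRows, fromRows_mul]

theorem diagLeft_diagLeft_mul_swapLast (h : Matrix κ κ F) :
    diagLeft j (diagLeft j h) * swapLast = swapLast * diagLeft j (diagLeft j h) := by
  simp [swapLast, diagLeft, fromBlocks_multiply, fromBlocks_mul_fromRows, fromCols_mul_fromBlocks]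

theorem range_sup_range_eq_top {A : Matrix κ κ F} {B : Matrix κ (Fin j) F}
    {C : Matrix (Fin j) κ F} {D : Matrix (Fin j) (Fin j) F}
    (hM : IsUnit (fromBlocks A B C D)) :
    LinearMap.range A.mulVecLin ⊔ LinearMap.range B.mulVecLin = ⊤ := by
  refine eq_top_iff.2 fun v _ ↦ ?_
  obtain ⟨N, hN⟩ := hM.exists_right_inv
  have hv := congrArg (fun P ↦ (P *ᵥ Sum.elim v 0) ∘ Sum.inl) hN
  simp only [← mulVec_mulVec, fromBlocks_mulVec, one_mulVec, Sum.elim_comp_inl] at hv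
  exact hv ▸ Submodule.add_mem_sup ⟨_, rfl⟩ ⟨_, rfl⟩

theorem isUnit_of_comap_range_eq_top {A : Matrix κ κ F} {B : Matrix κ (Fin j) F}
    {C : Matrix (Fin j) κ F} {D : Matrix (Fin j) (Fin j) F}
    (hM : IsUnit (fromBlocks A B C D))
    (htop : (LinearMap.range A.mulVecLin).comap B.mulVecLin = ⊤) : IsUnit A := by
  have hle : LinearMap.range B.mulVecLin ≤ LinearMap.range A.mulVecLin := by
    rwa [LinearMap.range_eq_map, Submodule.map_le_iff_le_comap, top_le_iff]
  rw [← mulVec_surjective_iff_isUnit]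
  exact LinearMap.range_eq_top.1 (by rw [← sup_eq_left.2 hle, range_sup_range_eq_top hM])

theorem exists_mul_fromCols_eq {A : Matrix κ κ F} {B : Matrix κ (Fin j) F}
    {C : Matrix (Fin j) κ F} {D : Matrix (Fin j) (Fin j) F}
    (hM : IsUnit (fromBlocks A B C D))
    (hbot : (LinearMap.range A.mulVecLin).comap B.mulVecLin = ⊥) :
    ∃ m, m + j = Fintype.card κ ∧ ∃ (h : Matrix (Fin m ⊕ Fin j) κ F)
      (h' : Matrix κ (Fin m ⊕ Fin j) F) (A₁ : Matrix (Fin m) κ F), h * h' = 1 ∧ h' * h = 1 ∧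
      h * A = fromRows A₁ 0 ∧ h * B = fromRows 0 1 := by
  obtain ⟨m, E, A₁, rfl, hE, range_E⟩ := exists_rank_factorization A
  have hinj : Function.Injective (fromCols E B).mulVecLin := by
    refine (injective_iff_map_eq_zero _).2 fun v hv ↦ ?_
    rw [mulVecLin_apply, fromCols_mulVec] at hv
    have hr : v ∘ Sum.inr = 0 := by
      rw [← Submodule.mem_bot F, ← hbot, Submodule.mem_comap, mulVecLin_apply,
        ← neg_eq_of_add_eq_zero_right hv, ← range_E]
      exact neg_mem ⟨_, rfl⟩
    have hl : v ∘ Sum.inl = 0 := hE (by simpa [hr] using hv)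
    rw [← Sum.elim_comp_inl_inr v, hl, hr, Sum.elim_zero_zero]
  have hsurj : Function.Surjective (fromCols E B).mulVecLin := fun v ↦ by
    have hv : v ∈ LinearMap.range E.mulVecLin ⊔ LinearMap.range B.mulVecLin := by
      rw [range_E, range_sup_range_eq_top hM]
      exact Submodule.mem_top
    obtain ⟨_, ⟨x, rfl⟩, _, ⟨y, rfl⟩, rfl⟩ := Submodule.mem_sup.1 hv
    exact ⟨Sum.elim x y, by simp [fromCols_mulVec]⟩
  have hcard : m + j = Fintype.card κ := by
    simpa using (LinearEquiv.ofBijective _ ⟨hinj, hsurj⟩).finrank_eq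
  obtain ⟨h, hh, hh'⟩ := exists_inverse_of_bijective ⟨hinj, hsurj⟩
  refine ⟨m, hcard, h, fromCols E B, A₁, hh, hh', ?_⟩
  rw [mul_fromCols, ← fromBlocks_one, ← fromCols_fromRows_eq_fromBlocks, fromCols_ext_iff] at hh
  refine ⟨?_, hh.2⟩
  rw [← Matrix.mul_assoc, hh.1, fromRows_mul, Matrix.one_mul, Matrix.zero_mul]

theorem exists_diagLeft_conj_eq_shear_mul_swapLast {A : Matrix κ κ F} {B : Matrix κ (Fin j) F}
    {C : Matrix (Fin j) κ F} {D : Matrix (Fin j) (Fin j) F}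
    (hM : IsUnit (fromBlocks A B C D))
    (hbot : (LinearMap.range A.mulVecLin).comap B.mulVecLin = ⊥) :
    ∃ m, m + j = Fintype.card κ ∧ ∃ (h : Matrix (Fin m ⊕ Fin j) κ F)
      (h' : Matrix κ (Fin m ⊕ Fin j) F) (Z : Matrix (Fin m ⊕ Fin j) (Fin j) F)
      (g : Matrix (Fin m ⊕ Fin j) (Fin m ⊕ Fin j) F), h * h' = 1 ∧ h' * h = 1 ∧
      diagLeft j h * fromBlocks A B C D * diagLeft j h' =
        (shear Z)ᵀ * (swapLast * diagLeft j g) := by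
  obtain ⟨m, hm, h, h', A₁, hh, hh', hA, hB⟩ := exists_mul_fromCols_eq hM hbot
  refine ⟨m, hm, h, h', fromRows 0 Dᵀ, fromRows (A₁ * h') (C * h'), hh, hh', ?_⟩
  simp [diagLeft, shear, swapLast, fromBlocks_multiply, fromBlocks_transpose, hA, hB,
    transpose_fromRows, fromRows_mul, fromCols_mul_fromRows, fromBlocks_mul_fromRows]

end Blocks

section WhittakerKernel

/-- The nilradical of the parabolic subalgebra stabilizing `J`: the matrices `X` with image in `J`
that vanish on `J`. The elements `1 + X` form the unipotent radical of the stabilizer of `J`. -/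
def parabolicNilradical {F n : Type*} [Field F] [Fintype n] (J : Submodule F (n → F)) :
    Submodule F (Matrix n n F) where
  carrier := {X | (∀ x, X *ᵥ x ∈ J) ∧ ∀ x ∈ J, X *ᵥ x = 0}
  add_mem' hX hY := ⟨fun x ↦ by rw [add_mulVec]; exact J.add_mem (hX.1 x) (hY.1 x),
    fun x hx ↦ by rw [add_mulVec, hX.2 x hx, hY.2 x hx, add_zero]⟩
  zero_mem' := ⟨fun x ↦ by simp, fun x _ ↦ zero_mulVec x⟩
  smul_mem' c X hX := ⟨fun x ↦ by rw [smul_mulVec]; exact J.smul_mem c (hX.1 x),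
    fun x hx ↦ by rw [smul_mulVec, hX.2 x hx, smul_zero]⟩

theorem mul_eq_zero_of_mem_parabolicNilradical {F n : Type*} [Field F] [Fintype n]
    {J : Submodule F (n → F)} {X Y : Matrix n n F} (hX : X ∈ parabolicNilradical J)
    (hY : Y ∈ parabolicNilradical J) : X * Y = 0 := by
  classical
  exact ext_of_mulVec_single fun i ↦ by rw [← mulVec_mulVec, hX.2 _ (hY.1 _), zero_mulVec]

theorem isUnit_one_add_of_mem_parabolicNilradical {F n : Type*} [Field F] [Fintype n]
    [DecidableEq n] {J : Submodule F (n → F)} {X : Matrix n n F}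
    (hX : X ∈ parabolicNilradical J) : IsUnit (1 + X) :=
  .of_mul_eq_one (1 - X) (by
    rw [add_mul, mul_sub, mul_sub, mul_eq_zero_of_mem_parabolicNilradical hX hX]
    simp)

variable {F K W : Type*} [Field F] [Field K] [AddCommGroup W] [Module K W] {j : ℕ}

/-- The properties of a matrix coefficient `T` of a representation of `GL (κ ⊕ Fin j)`, extended by
zero to singular matrices, between vectors that are fixed by the unipotent radical of shears,
transform under the unitriangular group in the last `j` coordinates by the generic character given
by `ψ`, and generate a cuspidal representation of `GL (Fin j)`. Moreover, `T` is assumed to be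
averaged over conjugation by `GL κ`. The left-hand vector enters through a contravariant form, so
left translations involve transposes. -/
structure IsWhittakerKernel {κ : Type*} [Fintype κ] [DecidableEq κ] (ψ : AddChar F K)
    (T : Matrix (κ ⊕ Fin j) (κ ⊕ Fin j) F → W) : Prop where
  eq_zero_of_not_isUnit : ∀ M, ¬ IsUnit M → T M = 0
  mul_shear : ∀ M X, T (M * shear X) = T M
  transpose_shear_mul : ∀ M X, T ((shear X)ᵀ * M) = T M
  mul_diagRight : ∀ M u, IsUpperUnitriangular u →
    T (M * diagRight κ u) = ψ (superdiagSum u) • T M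
  transpose_diagRight_mul : ∀ M u, IsUpperUnitriangular u →
    T ((diagRight κ u)ᵀ * M) = ψ (superdiagSum u) • T M
  conj : ∀ M h h', h * h' = 1 → T (diagLeft j h * M * diagLeft j h') = T M
  eq_zero_of_parabolicNilradical : ∀ M J, J ≠ ⊥ → J ≠ ⊤ →
    (∀ X ∈ parabolicNilradical J, T (M * diagRight κ (1 + X)) = T M) → T M = 0

namespace IsWhittakerKernel

variable {κ κ' : Type*} [Fintype κ] [DecidableEq κ] [Fintype κ'] [DecidableEq κ']
  {ψ : AddChar F K} {T : Matrix (κ ⊕ Fin j) (κ ⊕ Fin j) F → W}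

theorem mul_diagLeft_comm (hT : IsWhittakerKernel ψ T) (M : Matrix (κ ⊕ Fin j) (κ ⊕ Fin j) F)
    {h : Matrix κ κ F} (hh : IsUnit h) : T (M * diagLeft j h) = T (diagLeft j h * M) := by
  obtain ⟨h', hh'⟩ := hh.exists_left_inv
  rw [← hT.conj (diagLeft j h * M) h' h hh', ← Matrix.mul_assoc, diagLeft_mul, hh', diagLeft_one,
    Matrix.one_mul]

theorem apply_fromBlocks_add_left (hT : IsWhittakerKernel ψ T) (A : Matrix κ κ F) (B C D)
    (Z : Matrix κ (Fin j) F) :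
    T (fromBlocks A (B + A * Z) C (D + C * Z)) = T (fromBlocks A B C D) := by
  rw [← hT.mul_shear (fromBlocks A B C D) Z, shear, fromBlocks_multiply]
  simp [add_comm]

theorem apply_fromBlocks_add_top (hT : IsWhittakerKernel ψ T) (A : Matrix κ κ F) (B C D)
    (Y : Matrix (Fin j) κ F) :
    T (fromBlocks A B (C + Y * A) (D + Y * B)) = T (fromBlocks A B C D) := by
  rw [← hT.transpose_shear_mul (fromBlocks A B C D) Yᵀ, shear, fromBlocks_transpose,
    fromBlocks_multiply]
  simp [add_comm]

theorem apply_fromBlocks_eq_zero (hT : IsWhittakerKernel ψ T) (A : Matrix κ κ F) (B C D)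
    (hbot : (LinearMap.range A.mulVecLin).comap B.mulVecLin ≠ ⊥)
    (htop : (LinearMap.range A.mulVecLin).comap B.mulVecLin ≠ ⊤) :
    T (fromBlocks A B C D) = 0 := by
  refine hT.eq_zero_of_parabolicNilradical _ _ hbot htop fun X hX ↦ ?_
  obtain ⟨R, hR⟩ := exists_mul_mul_eq_self A
  have hBX : A * (R * (B * X)) = B * X := ext_of_mulVec_single fun i ↦ by
    obtain ⟨p, hp⟩ := hX.1 (Pi.single i 1)
    have hp' : (B * X) *ᵥ Pi.single i 1 = A *ᵥ p := by rw [← mulVec_mulVec]; exact hp.symm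
    rw [← Matrix.mul_assoc, ← mulVec_mulVec, hp', mulVec_mulVec, hR]
  obtain ⟨Y, hY⟩ : ∃ Y : Matrix (Fin j) κ F,
      Y * fromCols A B = fromCols 0 (D * X - C * (R * (B * X))) := by
    refine exists_mul_eq_of_ker_le fun v hv ↦ ?_
    rw [fromCols_mulVec] at hv ⊢
    have hq : X *ᵥ (v ∘ Sum.inr) = 0 := hX.2 _ ⟨-(v ∘ Sum.inl), by
      simpa [mulVec_neg] using neg_eq_of_add_eq_zero_right hv⟩
    simp [sub_mulVec, ← mulVec_mulVec, hq]
  rw [mul_fromCols, fromCols_ext_iff] at hY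
  rw [← hT.apply_fromBlocks_add_left A B C D (R * (B * X)),
    ← hT.apply_fromBlocks_add_top _ _ _ _ Y, diagRight, fromBlocks_multiply, hBX, hY.1,
    Matrix.mul_add Y, hY.2, ← hBX, ← Matrix.mul_assoc Y A, hY.1]
  simp [Matrix.mul_add, hBX]

theorem apply_transpose_fromBlocks_of_isUnit (hT : IsWhittakerKernel ψ T) (hψ : ψ ≠ 1)
    {A : Matrix κ κ F} (hA : IsUnit A) (B C D) :
    T (fromBlocks A B C D)ᵀ = T (fromBlocks A B C D) := by
  have := hA.invertible
  obtain ⟨S, hS, hSA⟩ := exists_isUnit_mul_eq_transpose_mul A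
  obtain ⟨S', hS'⟩ := hS.exists_right_inv
  let t (z : Matrix (Fin j) (Fin j) F) := T (fromBlocks A 0 0 z)
  have t_transpose (z) : t zᵀ = t z := by
    refine apply_transpose_eq_of_equivariant hψ (fun u z hu ↦ ?_) (fun u z hu ↦ ?_) z
    · rw [← hT.transpose_diagRight_mul _ u hu]
      simp [t, diagRight, fromBlocks_transpose, fromBlocks_multiply]
    · rw [← hT.mul_diagRight _ u hu]
      simp [t, diagRight, fromBlocks_multiply]
  have t_conj (z) : T (fromBlocks Aᵀ 0 0 z) = t z := by
    simp only [t, ← hT.conj (fromBlocks A 0 0 z) S S' hS']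
    simp [diagLeft, fromBlocks_multiply, hSA, Matrix.mul_assoc, hS']
  have ldu := fromBlocks_eq_of_invertible₁₁ A B C D
  have transpose_shear_eq (Y : Matrix (Fin j) κ F) : fromBlocks 1 0 Y 1 = (shear Yᵀ)ᵀ := by
    simp [shear, fromBlocks_transpose]
  rw [transpose_shear_eq, ← shear.eq_1] at ldu
  rw [ldu, transpose_mul, transpose_mul, transpose_transpose, hT.transpose_shear_mul, hT.mul_shear,
    hT.mul_shear, hT.transpose_shear_mul, fromBlocks_transpose]
  rw [transpose_zero, transpose_zero]
  exact (t_conj _).trans (t_transpose _)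

theorem apply_diagLeft_conj (hT : IsWhittakerKernel ψ T) {h : Matrix κ' κ F} {h' : Matrix κ κ' F}
    (hh : h * h' = 1) (hh' : h' * h = 1) (N : Matrix (κ' ⊕ Fin j) (κ' ⊕ Fin j) F)
    {k k' : Matrix κ' κ' F} (hk : k * k' = 1) :
    T (diagLeft j h' * (diagLeft j k * N * diagLeft j k') * diagLeft j h) =
      T (diagLeft j h' * N * diagLeft j h) := by
  have hl : diagLeft j (h' * (k * h)) * diagLeft j h' = diagLeft j h' * diagLeft j k := by
    rw [diagLeft_mul, diagLeft_mul, Matrix.mul_assoc, Matrix.mul_assoc, hh, Matrix.mul_one]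
  have hr : diagLeft j h * diagLeft j (h' * (k' * h)) = diagLeft j k' * diagLeft j h := by
    rw [diagLeft_mul, diagLeft_mul, ← Matrix.mul_assoc, hh, Matrix.one_mul]
  have hkk : h' * (k * h) * (h' * (k' * h)) = 1 := by
    rw [Matrix.mul_assoc, Matrix.mul_assoc, ← Matrix.mul_assoc h, hh, Matrix.one_mul,
      ← Matrix.mul_assoc k, hk, Matrix.one_mul, hh']
  rw [← hT.conj (diagLeft j h' * N * diagLeft j h) _ _ hkk]
  simp only [Matrix.mul_assoc, hr]
  rw [← Matrix.mul_assoc _ (diagLeft j h'), hl, Matrix.mul_assoc]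

theorem transport (hT : IsWhittakerKernel ψ T) {h : Matrix κ' κ F} {h' : Matrix κ κ' F}
    (hh : h * h' = 1) (hh' : h' * h = 1) :
    IsWhittakerKernel ψ fun N : Matrix (κ' ⊕ Fin j) (κ' ⊕ Fin j) F ↦
      T (diagLeft j h' * N * diagLeft j h) where
  eq_zero_of_not_isUnit N hN :=
    hT.eq_zero_of_not_isUnit _ (mt (isUnit_of_isUnit_diagLeft_mul_mul hh) hN)
  mul_shear N X := by
    have hX := diagLeft_mul_shear h (h' * X)
    rw [← Matrix.mul_assoc, hh, Matrix.one_mul] at hX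
    rw [Matrix.mul_assoc _ (N * _), Matrix.mul_assoc, ← hX, ← Matrix.mul_assoc N,
      ← Matrix.mul_assoc, hT.mul_shear, ← Matrix.mul_assoc]
  transpose_shear_mul N X := by
    have hX := congrArg transpose (diagLeft_mul_shear h'ᵀ (hᵀ * X))
    rw [← Matrix.mul_assoc, ← transpose_mul, hh, transpose_one, Matrix.one_mul, transpose_mul,
      transpose_mul, transpose_diagLeft, transpose_transpose] at hX
    rw [← Matrix.mul_assoc, ← hX, Matrix.mul_assoc, Matrix.mul_assoc, hT.transpose_shear_mul,
      ← Matrix.mul_assoc]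
  mul_diagRight N u hu := by
    rw [← hT.mul_diagRight _ u hu, ← Matrix.mul_assoc, Matrix.mul_assoc, Matrix.mul_assoc,
      ← diagLeft_mul_diagRight, ← Matrix.mul_assoc, ← Matrix.mul_assoc]
  transpose_diagRight_mul N u hu := by
    rw [← hT.transpose_diagRight_mul _ u hu, ← Matrix.mul_assoc, transpose_diagRight,
      diagLeft_mul_diagRight, transpose_diagRight, Matrix.mul_assoc, Matrix.mul_assoc,
      ← Matrix.mul_assoc _ N]
  conj N k k' hk := hT.apply_diagLeft_conj hh hh' N hk
  eq_zero_of_parabolicNilradical N J hbot htop hN :=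
    hT.eq_zero_of_parabolicNilradical _ J hbot htop fun X hX ↦ by
      rw [← hN X hX]
      simp only [Matrix.mul_assoc, diagLeft_mul_diagRight]

theorem apply_transpose_of_transport (hT : IsWhittakerKernel ψ T) {h : Matrix κ' κ F}
    {h' : Matrix κ κ' F} (hh : h * h' = 1) (hh' : h' * h = 1)
    {N : Matrix (κ' ⊕ Fin j) (κ' ⊕ Fin j) F}
    (hN : T (diagLeft j h' * Nᵀ * diagLeft j h) = T (diagLeft j h' * N * diagLeft j h)) :
    T (diagLeft j h' * N * diagLeft j h)ᵀ = T (diagLeft j h' * N * diagLeft j h) := by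
  have hl : diagLeft j (h' * h'ᵀ) * diagLeft j hᵀ = diagLeft j h' := by
    rw [diagLeft_mul, Matrix.mul_assoc, ← transpose_mul, hh, transpose_one, Matrix.mul_one]
  have hr : diagLeft j h'ᵀ * diagLeft j (hᵀ * h) = diagLeft j h := by
    rw [diagLeft_mul, ← Matrix.mul_assoc, ← transpose_mul, hh, transpose_one, Matrix.one_mul]
  have hk : h' * h'ᵀ * (hᵀ * h) = 1 := by
    rw [Matrix.mul_assoc, ← Matrix.mul_assoc h'ᵀ, ← transpose_mul, hh, transpose_one,
      Matrix.one_mul, hh']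
  rw [← hT.conj _ _ _ hk, transpose_mul, transpose_mul, transpose_diagLeft, transpose_diagLeft,
    ← Matrix.mul_assoc, hl, Matrix.mul_assoc, Matrix.mul_assoc, hr, ← Matrix.mul_assoc, hN]

theorem apply_swapLast_mul_diagLeft_mul
    {T : Matrix ((κ ⊕ Fin j) ⊕ Fin j) ((κ ⊕ Fin j) ⊕ Fin j) F → W}
    (hT : IsWhittakerKernel ψ T) (g : Matrix (κ ⊕ Fin j) (κ ⊕ Fin j) F)
    {x : Matrix (κ ⊕ Fin j) (κ ⊕ Fin j) F} (hx : IsUnit x)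
    {y : Matrix ((κ ⊕ Fin j) ⊕ Fin j) ((κ ⊕ Fin j) ⊕ Fin j) F}
    (hxy : diagLeft j x * swapLast = swapLast * y) :
    T (swapLast * diagLeft j (g * x)) = T (swapLast * (y * diagLeft j g)) := by
  rw [← diagLeft_mul, ← Matrix.mul_assoc, hT.mul_diagLeft_comm _ hx, ← Matrix.mul_assoc,
    ← Matrix.mul_assoc, hxy]

theorem isUnit_of_isUnit_swapLast_mul_diagLeft {g : Matrix (κ ⊕ Fin j) (κ ⊕ Fin j) F}
    (hg : IsUnit (swapLast * diagLeft j g)) : IsUnit g := by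
  rw [← isUnit_diagLeft_iff (j := j), ← Matrix.one_mul (diagLeft j g), ← swapLast_mul_swapLast,
    Matrix.mul_assoc]
  exact .mul (.of_mul_eq_one _ swapLast_mul_swapLast) hg

theorem swap {T : Matrix ((κ ⊕ Fin j) ⊕ Fin j) ((κ ⊕ Fin j) ⊕ Fin j) F → W}
    (hT : IsWhittakerKernel ψ T) : IsWhittakerKernel ψ fun g ↦ T (swapLast * diagLeft j g) where
  eq_zero_of_not_isUnit g hg :=
    hT.eq_zero_of_not_isUnit _ (mt isUnit_of_isUnit_swapLast_mul_diagLeft hg)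
  mul_shear g X := by
    by_cases hg : IsUnit g
    · obtain ⟨g', hg'⟩ := hg.exists_right_inv
      have hX := diagLeft_mul_shear g (g' * (fromRows X 0 : Matrix (κ ⊕ Fin j) (Fin j) F))
      rw [← Matrix.mul_assoc, hg', Matrix.one_mul] at hX
      rw [hT.apply_swapLast_mul_diagLeft_mul g (isUnit_shear X) (diagLeft_shear_mul_swapLast X),
        ← hX, ← Matrix.mul_assoc, hT.mul_shear]
    · have hgX : ¬ IsUnit (g * shear X) := fun h ↦ hg (isUnit_of_mul_isUnit_left h)
      rw [hT.eq_zero_of_not_isUnit _ (mt isUnit_of_isUnit_swapLast_mul_diagLeft hg),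
        hT.eq_zero_of_not_isUnit _ (mt isUnit_of_isUnit_swapLast_mul_diagLeft hgX)]
  transpose_shear_mul g X := by
    have hX := congrArg transpose (diagLeft_shear_mul_swapLast (κ := κ) X)
    rw [transpose_mul, transpose_mul, transpose_swapLast, transpose_diagLeft] at hX
    rw [← diagLeft_mul, ← Matrix.mul_assoc, hX, Matrix.mul_assoc, hT.transpose_shear_mul]
  mul_diagRight g u hu := by
    rw [hT.apply_swapLast_mul_diagLeft_mul g (isUnit_diagRight_iff.2 hu.isUnit)
      (diagLeft_diagRight_mul_swapLast u), ← diagLeft_mul_diagRight, ← Matrix.mul_assoc,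
      hT.mul_diagRight _ u hu]
  transpose_diagRight_mul g u hu := by
    have hX := congrArg transpose (diagLeft_diagRight_mul_swapLast (κ := κ) u)
    rw [transpose_mul, transpose_mul, transpose_swapLast, transpose_diagLeft] at hX
    rw [← diagLeft_mul, ← Matrix.mul_assoc, hX, Matrix.mul_assoc, hT.transpose_diagRight_mul _ u hu]
  conj g h h' hh := by
    have hh₂ : diagLeft j h * diagLeft j h' = 1 := by rw [diagLeft_mul, hh, diagLeft_one]
    rw [← hT.conj (swapLast * diagLeft j g) _ _ hh₂]
    simp only [← diagLeft_mul, ← Matrix.mul_assoc, diagLeft_diagLeft_mul_swapLast]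
  eq_zero_of_parabolicNilradical g J hbot htop hg :=
    hT.eq_zero_of_parabolicNilradical _ J hbot htop fun X hX ↦ by
      rw [← hg X hX, hT.apply_swapLast_mul_diagLeft_mul g
        (isUnit_diagRight_iff.2 (isUnit_one_add_of_mem_parabolicNilradical hX))
        (diagLeft_diagRight_mul_swapLast _), ← diagLeft_mul_diagRight, ← Matrix.mul_assoc]

theorem apply_transpose_swapLast_mul_diagLeft
    {T : Matrix ((κ ⊕ Fin j) ⊕ Fin j) ((κ ⊕ Fin j) ⊕ Fin j) F → W}
    (hT : IsWhittakerKernel ψ T) {g : Matrix (κ ⊕ Fin j) (κ ⊕ Fin j) F} (hg : IsUnit g) :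
    T (swapLast * diagLeft j g)ᵀ = T (swapLast * diagLeft j gᵀ) := by
  rw [transpose_mul, transpose_swapLast, transpose_diagLeft,
    hT.mul_diagLeft_comm _ ((isUnit_transpose g).2 hg)]

theorem apply_transpose_of_swap {T : Matrix ((κ ⊕ Fin j) ⊕ Fin j) ((κ ⊕ Fin j) ⊕ Fin j) F → W}
    (hT : IsWhittakerKernel ψ T) {g : Matrix (κ ⊕ Fin j) (κ ⊕ Fin j) F} (hg : IsUnit g)
    (h : T (swapLast * diagLeft j gᵀ) = T (swapLast * diagLeft j g)) (Z) :
    T ((shear Z)ᵀ * (swapLast * diagLeft j g))ᵀ = T ((shear Z)ᵀ * (swapLast * diagLeft j g)) := by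
  rw [transpose_mul, transpose_transpose, hT.mul_shear, hT.transpose_shear_mul,
    hT.apply_transpose_swapLast_mul_diagLeft hg, h]

/-- Either `T M` vanishes by cuspidality, or the upper left block of `M` is invertible, or `M`
comes from the smaller group `GL κ` after exchanging two blocks of size `j`. -/
theorem apply_eq_zero_or_apply_transpose (hψ : ψ ≠ 1) {n : ℕ}
    (ih : ∀ m < n, ∀ T : Matrix (Fin m ⊕ Fin j) (Fin m ⊕ Fin j) F → W, IsWhittakerKernel ψ T →
      ∀ M, T Mᵀ = T M)
    {T : Matrix (Fin n ⊕ Fin j) (Fin n ⊕ Fin j) F → W} (hT : IsWhittakerKernel ψ T)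
    {M : Matrix (Fin n ⊕ Fin j) (Fin n ⊕ Fin j) F} (hM : IsUnit M) : T M = 0 ∨ T Mᵀ = T M := by
  obtain ⟨A, B, C, D, rfl⟩ : ∃ A B C D, M = fromBlocks A B C D :=
    ⟨_, _, _, _, (fromBlocks_toBlocks M).symm⟩
  by_cases htop : (LinearMap.range A.mulVecLin).comap B.mulVecLin = ⊤
  · have hA := isUnit_of_comap_range_eq_top hM htop
    exact .inr (hT.apply_transpose_fromBlocks_of_isUnit hψ hA B C D)
  by_cases hbot : (LinearMap.range A.mulVecLin).comap B.mulVecLin = ⊥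
  swap
  · exact .inl (hT.apply_fromBlocks_eq_zero A B C D hbot htop)
  have hj : 0 < j := by
    rcases Nat.eq_zero_or_pos j with rfl | hj
    · exact absurd (Subsingleton.elim _ _) htop
    · exact hj
  obtain ⟨m, hm, h, h', Z, g, hh, hh', hg⟩ := exists_diagLeft_conj_eq_shear_mul_swapLast hM hbot
  rw [Fintype.card_fin] at hm
  have hM_eq : diagLeft j h' * (diagLeft j h * fromBlocks A B C D * diagLeft j h') * diagLeft j h
      = fromBlocks A B C D := by
    rw [← Matrix.mul_assoc, ← Matrix.mul_assoc, diagLeft_mul, Matrix.mul_assoc, diagLeft_mul, hh',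
      diagLeft_one, Matrix.one_mul, Matrix.mul_one]
  have hT' := hT.transport hh hh'
  rw [← hM_eq, hg]
  by_cases hg_unit : IsUnit g
  · exact .inr (hT.apply_transpose_of_transport hh hh'
      (hT'.apply_transpose_of_swap hg_unit (ih m (by omega) _ hT'.swap g) Z))
  · exact .inl ((hT'.transpose_shear_mul _ Z).trans
      (hT'.eq_zero_of_not_isUnit _ (mt isUnit_of_isUnit_swapLast_mul_diagLeft hg_unit)))

theorem apply_transpose (hψ : ψ ≠ 1) {n : ℕ} {T : Matrix (Fin n ⊕ Fin j) (Fin n ⊕ Fin j) F → W}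
    (hT : IsWhittakerKernel ψ T) (M : Matrix (Fin n ⊕ Fin j) (Fin n ⊕ Fin j) F) : T Mᵀ = T M := by
  induction n using Nat.strong_induction_on with
  | _ n ih =>
    by_cases hM : IsUnit M
    · have hMT := (isUnit_transpose M).2 hM
      rcases apply_eq_zero_or_apply_transpose hψ ih hT hM with h₁ | h₁
      · rcases apply_eq_zero_or_apply_transpose hψ ih hT hMT with h₂ | h₂
        · rw [h₁, h₂]
        · rw [← h₂, transpose_transpose]
      · exact h₁
    · rw [hT.eq_zero_of_not_isUnit M hM,
        hT.eq_zero_of_not_isUnit Mᵀ (mt (isUnit_transpose M).1 hM)]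

end IsWhittakerKernel

end WhittakerKernel

section WhittakerVector

variable {F K : Type*} [Field F] [Field K]

theorem exists_addChar_eigenvector [Finite F] [CharZero K] {V : Type*} [AddCommGroup V]
    [Module K V] {ι : Type*} [Fintype ι] {ψ : AddChar F K} (hψ : ψ ≠ 1)
    {c : (ι → F) → Module.End K V} (c_zero : c 0 = 1) (c_add : ∀ x y, c (x + y) = c x * c y)
    {N : Submodule K V} (hN : N ≠ ⊥) (c_mem : ∀ x, ∀ v ∈ N, c x v ∈ N) :
    ∃ a, ∃ v ∈ N, v ≠ 0 ∧ ∀ x, c x v = ψ (a ⬝ᵥ x) • v := by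
  classical
  have := Fintype.ofFinite F
  obtain ⟨v, hv, hv₀⟩ := N.exists_mem_ne_zero_of_ne_bot hN
  let w (a : ι → F) : V := ∑ x, ψ (-(a ⬝ᵥ x)) • c x v
  have sum_ψ (x : ι → F) (hx : x ≠ 0) : ∑ a : ι → F, ψ (-(a ⬝ᵥ x)) = 0 := by
    let χ : AddChar (ι → F) K := ψ.compAddMonoidHom
      (-(AddMonoidHom.mk' (fun a : ι → F ↦ a ⬝ᵥ x) fun a b ↦ add_dotProduct a b x))
    refine AddChar.sum_eq_zero_of_ne_one (ψ := χ) fun hχ ↦ hψ (AddChar.ext _ _ fun t ↦ ?_)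
    obtain ⟨i, hi⟩ := Function.ne_iff.1 hx
    rw [Pi.zero_apply] at hi
    simpa [χ, neg_div, hi] using DFunLike.congr_fun hχ (Pi.single i (-t / x i))
  have sum_w : ∑ a, w a = (Fintype.card (ι → F) : K) • v := by
    rw [Finset.sum_comm, Finset.sum_eq_single 0]
    · simp [c_zero, ← Nat.cast_smul_eq_nsmul K]
    · intro x _ hx
      rw [← Finset.sum_smul, sum_ψ x hx, zero_smul]
    · simp
  obtain ⟨a, ha⟩ : ∃ a, w a ≠ 0 := by
    by_contra! h
    rw [Finset.sum_eq_zero fun a _ ↦ h a, eq_comm, smul_eq_zero] at sum_w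
    exact sum_w.elim (Nat.cast_ne_zero.2 Fintype.card_ne_zero) hv₀
  refine ⟨a, w a, N.sum_mem fun x _ ↦ N.smul_mem _ (c_mem x v hv), ha, fun y ↦ ?_⟩
  rw [map_sum, Finset.smul_sum, ← Equiv.sum_comp (Equiv.addLeft y) fun x ↦ _ • ψ _ • c x v]
  refine Finset.sum_congr rfl fun x _ ↦ ?_
  rw [map_smul, ← Module.End.mul_apply, ← c_add, smul_smul, ← AddChar.map_add_eq_mul]
  simp [dotProduct_add]

variable {j : ℕ}

/-- The unitriangular matrix that differs from `1` only in column `q`, by the vector of those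
coordinates of `x` that lie above `q`. -/
noncomputable def columnTransvection (q : Fin j) (x : Fin j → F) : Matrix (Fin j) (Fin j) F :=
  1 + vecMulVec ((Set.Iio q).indicator x) (Pi.single q 1)

theorem columnTransvection_mul_apply (q : Fin j) (x : Fin j → F) (u : Matrix (Fin j) (Fin j) F)
    (i l : Fin j) :
    (columnTransvection q x * u) i l = u i l + (Set.Iio q).indicator x i * u q l := by
  simp [columnTransvection, add_mul, vecMulVec_mul, vecMulVec_apply]

theorem mul_columnTransvection_apply (q : Fin j) (x : Fin j → F) (u : Matrix (Fin j) (Fin j) F)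
    (i l : Fin j) : (u * columnTransvection q x) i l =
      u i l + (u *ᵥ (Set.Iio q).indicator x) i * (Pi.single q 1 : Fin j → F) l := by
  simp [columnTransvection, mul_add, mul_vecMulVec, vecMulVec_apply]

theorem columnTransvection_zero (q : Fin j) : columnTransvection q (0 : Fin j → F) = 1 := by
  simp [columnTransvection]

theorem columnTransvection_add (q : Fin j) (x y : Fin j → F) :
    columnTransvection q (x + y) = columnTransvection q x * columnTransvection q y := by
  rw [columnTransvection, columnTransvection, columnTransvection, Set.indicator_add', add_vecMulVec]
  simp [mul_add, add_mul, vecMulVec_mul_vecMulVec, add_assoc, add_comm]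

theorem isUpperUnitriangular_columnTransvection (q : Fin j) (x : Fin j → F) :
    IsUpperUnitriangular (columnTransvection q x) := by
  refine ⟨fun i ↦ ?_, fun i l hli ↦ ?_⟩
  · by_cases hi : i = q <;> simp [columnTransvection, vecMulVec_apply, hi]
  · by_cases hl : l = q
    · simp [columnTransvection, vecMulVec_apply, one_apply_ne hli.ne', hl ▸ hli.le]
    · simp [columnTransvection, vecMulVec_apply, one_apply_ne hli.ne', hl]

/-- The first `c` columns agree with those of the identity matrix. -/
def HasTrivialColumns (c : ℕ) (u : Matrix (Fin j) (Fin j) F) : Prop :=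
  ∀ i l : Fin j, (l : ℕ) < c → u i l = (1 : Matrix (Fin j) (Fin j) F) i l

theorem HasTrivialColumns.mulVec_eq {c : ℕ} {u : Matrix (Fin j) (Fin j) F}
    (hu : HasTrivialColumns c u) {x : Fin j → F} (hx : ∀ i : Fin j, c ≤ i → x i = 0) :
    u *ᵥ x = x := by
  refine Eq.trans ?_ (one_mulVec x)
  ext i
  simp only [mulVec, dotProduct]
  refine Finset.sum_congr rfl fun l _ ↦ ?_
  rcases lt_or_ge (l : ℕ) c with h | h
  · rw [hu i l h]
  · rw [hx l h, mul_zero, mul_zero]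

theorem HasTrivialColumns.conj_columnTransvection {q : Fin j} {u : Matrix (Fin j) (Fin j) F}
    (hu : HasTrivialColumns (q + 1) u) (x : Fin j → F) :
    HasTrivialColumns (q + 1) (columnTransvection q (-x) * (u * columnTransvection q x)) := by
  intro i l hl
  have ux : u *ᵥ (Set.Iio q).indicator x = (Set.Iio q).indicator x :=
    hu.mulVec_eq fun i hi ↦ Set.indicator_of_notMem (s := Set.Iio q) (by simp; omega) x
  rw [columnTransvection_mul_apply, mul_columnTransvection_apply, mul_columnTransvection_apply, ux,
    hu i l hl, hu q l hl, Set.indicator_neg']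
  by_cases hql : l = q
  · subst hql
    simp
  · simp [hql, one_apply_ne (Ne.symm hql)]

theorem IsUpperUnitriangular.exists_eq_columnTransvection_mul {q : Fin j}
    {u : Matrix (Fin j) (Fin j) F} (hu : IsUpperUnitriangular u) (huq : HasTrivialColumns q u) :
    ∃ u', IsUpperUnitriangular u' ∧ HasTrivialColumns (q + 1) u' ∧
      u = columnTransvection q (fun i ↦ u i q) * u' := by
  let x := fun i ↦ u i q
  refine ⟨columnTransvection q (-x) * u, (isUpperUnitriangular_columnTransvection q _).mul hu,
    fun i l hl ↦ ?_, ?_⟩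
  · rw [columnTransvection_mul_apply, Set.indicator_neg']
    rcases (Nat.lt_succ_iff_lt_or_eq.1 hl) with hl | hl
    · rw [huq i l hl, huq q l hl, one_apply_ne (Fin.ne_of_gt hl), mul_zero, add_zero]
    · obtain rfl : l = q := Fin.ext hl
      rcases lt_trichotomy i l with h | rfl | h
      · simp [x, h, hu.1, one_apply_ne h.ne]
      · simp [hu.1]
      · simp [h.le, hu.2 _ _ h, one_apply_ne h.ne']
  · rw [← mul_assoc, ← columnTransvection_add, add_neg_cancel, columnTransvection_zero, one_mul]

theorem superdiagSum_columnTransvection {p q : Fin j} (hpq : (p : ℕ) + 1 = q) (x : Fin j → F) :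
    superdiagSum (columnTransvection q x) = x p := by
  have hlt : p < q := Fin.lt_def.2 (by omega)
  rw [superdiagSum_eq_apply hpq fun i l hil hl ↦ ?_]
  · simp [columnTransvection, vecMulVec_apply, hlt, one_apply_ne hlt.ne]
  · have hne : i ≠ l := fun h ↦ by simp [h] at hil
    simp [columnTransvection, vecMulVec_apply, hl, one_apply_ne hne]

theorem HasTrivialColumns.isUpperUnitriangular_and_superdiagSum_eq {q : Fin j}
    {u u' : Matrix (Fin j) (Fin j) F} (hu'q : HasTrivialColumns (q + 1) u')
    (hu : IsUpperUnitriangular u) (huq : HasTrivialColumns (q + 1) u)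
    (h : ∀ i l, q ≤ i → u' i l = u i l) :
    IsUpperUnitriangular u' ∧ superdiagSum u' = superdiagSum u := by
  have h_eq (i l : Fin j) (hil : (l : ℕ) ≤ i + 1) : u' i l = u i l := by
    rcases le_or_gt q i with hi | hi
    · exact h i l hi
    · rw [Fin.lt_def] at hi
      rw [hu'q i l (by omega), huq i l (by omega)]
  exact ⟨⟨fun i ↦ by rw [h_eq i i (by omega), hu.1],
    fun i l hli ↦ by rw [h_eq i l (by omega), hu.2 i l hli]⟩,
    superdiagSum_congr fun i l hil ↦ h_eq i l hil.ge⟩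

theorem IsUpperUnitriangular.exists_mul_eq_mul {q : Fin j} {u n m : Matrix (Fin j) (Fin j) F}
    (hu : IsUpperUnitriangular u) (huq : HasTrivialColumns (q + 1) u) (hnm : n * m = 1)
    (hn : ∀ i, q ≤ i → n i = Pi.single i 1) :
    ∃ u', IsUpperUnitriangular u' ∧ HasTrivialColumns (q + 1) u' ∧
      superdiagSum u' = superdiagSum u ∧ u * n = n * u' := by
  have row_mul {m' : Matrix (Fin j) (Fin j) F} (N : Matrix (Fin j) (Fin j) F) {i : Fin j}
      (hi : m' i = Pi.single i 1) : (m' * N) i = N i := by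
    rw [mul_apply_eq_vecMul, hi, single_one_vecMul, row]
  have u'_row (i l : Fin j) (hi : q ≤ i) : (1 + m * (u - 1)) i l = u i l := by
    have hmi : m i = Pi.single i 1 := by
      rw [← row_mul m (hn i hi), hnm]
      ext l
      simp [one_apply, Pi.single_apply, eq_comm]
    rw [Matrix.add_apply, row_mul _ hmi, Matrix.sub_apply, add_sub_cancel]
  have hu'q : HasTrivialColumns (q + 1) (1 + m * (u - 1)) := fun i l hl ↦ by
    rw [Matrix.add_apply, mul_apply, Finset.sum_eq_zero, add_zero]
    exact fun k _ ↦ by rw [Matrix.sub_apply, huq k l hl, sub_self, mul_zero]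
  obtain ⟨hu', hsum⟩ := hu'q.isUpperUnitriangular_and_superdiagSum_eq hu huq u'_row
  refine ⟨1 + m * (u - 1), hu', hu'q, hsum, ?_⟩
  have h : (u - 1) * (n - 1) = 0 := by
    ext i l
    rw [mul_apply, Matrix.zero_apply]
    refine Finset.sum_eq_zero fun k _ ↦ ?_
    rcases le_total q k with hk | hk
    · simp [hn k hk, one_apply, Pi.single_apply, eq_comm]
    · simp [huq i k (Nat.lt_succ_of_le hk)]
  have hn_mul : n * (m * (u - 1)) = u - 1 := by rw [← mul_assoc, hnm, one_mul]
  rw [mul_add, hn_mul, mul_one, ← sub_eq_zero, ← h]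
  noncomm_ring

theorem exists_columnTransvection_mul_eq {q : Fin j} {n m : Matrix (Fin j) (Fin j) F}
    (hnm : n * m = 1) (hn : ∀ i, q ≤ i → n i = Pi.single i 1) (x : Fin j → F) :
    ∃ y, n *ᵥ (Set.Iio q).indicator y = (Set.Iio q).indicator x ∧
      columnTransvection q x * n = n * columnTransvection q y := by
  have hny : n *ᵥ (m *ᵥ (Set.Iio q).indicator x) = (Set.Iio q).indicator x := by
    rw [mulVec_mulVec, hnm, one_mulVec]
  have hy : (Set.Iio q).indicator (m *ᵥ (Set.Iio q).indicator x) =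
      m *ᵥ (Set.Iio q).indicator x := by
    refine Set.indicator_eq_self.2 fun i hi ↦ ?_
    by_contra hqi
    have hni := congrFun hny i
    rw [mulVec, hn i (not_lt.1 hqi), single_one_dotProduct, Set.indicator_of_notMem hqi] at hni
    exact hi hni
  refine ⟨m *ᵥ (Set.Iio q).indicator x, by rw [hy, hny], ?_⟩
  rw [columnTransvection, columnTransvection, hy, add_mul, mul_add, vecMulVec_mul, mul_vecMulVec,
    hny, single_one_vecMul, one_mul, mul_one, row, hn q le_rfl]

/-- The span of the first `q` basis vectors: a step of the standard flag. -/
def vectorsSupportedBelow (q : Fin j) : Submodule F (Fin j → F) where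
  carrier := {x | ∀ i, q ≤ i → x i = 0}
  add_mem' hx hy i hi := by rw [Pi.add_apply, hx i hi, hy i hi, add_zero]
  zero_mem' _ _ := rfl
  smul_mem' c x hx i hi := by rw [Pi.smul_apply, hx i hi, smul_zero]

theorem single_mem_vectorsSupportedBelow {l q : Fin j} (h : l < q) :
    Pi.single l 1 ∈ vectorsSupportedBelow (F := F) q :=
  fun _ hi ↦ Pi.single_eq_of_ne (h.trans_le hi).ne' 1

theorem apply_eq_zero_of_mem_parabolicNilradical {q : Fin j} {X : Matrix (Fin j) (Fin j) F}
    (hX : X ∈ parabolicNilradical (vectorsSupportedBelow q)) {i l : Fin j} (h : q ≤ i ∨ l < q) :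
    X i l = 0 := by
  rcases h with hi | hl
  · simpa using hX.1 (Pi.single l 1) i hi
  · simpa using congrFun (hX.2 _ (single_mem_vectorsSupportedBelow hl)) i

theorem isUpperUnitriangular_one_add_of_mem_parabolicNilradical {q : Fin j}
    {X : Matrix (Fin j) (Fin j) F} (hX : X ∈ parabolicNilradical (vectorsSupportedBelow q)) :
    IsUpperUnitriangular (1 + X) ∧ HasTrivialColumns q (1 + X) := by
  have X_apply {i l : Fin j} (h : q ≤ i ∨ l < q) := apply_eq_zero_of_mem_parabolicNilradical hX h
  refine ⟨⟨fun i ↦ ?_, fun i l hli ↦ ?_⟩, fun i l hl ↦ by simp [X_apply (i := i) (.inr hl)]⟩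
  · simp [X_apply (le_or_gt q i)]
  · simp [X_apply ((le_or_gt q i).imp_right hli.trans), one_apply_ne hli.ne']

theorem superdiagSum_one_add_of_mem_parabolicNilradical {p q : Fin j} (hpq : (p : ℕ) + 1 = q)
    {X : Matrix (Fin j) (Fin j) F} (hX : X ∈ parabolicNilradical (vectorsSupportedBelow q)) :
    superdiagSum (1 + X) = (1 + X) p q := by
  refine superdiagSum_eq_apply hpq fun i l hil hl ↦ ?_
  have hne : i ≠ l := fun h ↦ by simp [h] at hil
  have h : q ≤ i ∨ l < q := by
    rw [Fin.le_def, Fin.lt_def]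
    have := Fin.val_ne_of_ne hl
    omega
  simp [apply_eq_zero_of_mem_parabolicNilradical hX h, one_apply_ne hne]

theorem exists_isUnit_row_eq {ι : Type*} [Fintype ι] [DecidableEq ι] {a : ι → F} {r : ι}
    (hr : a r ≠ 0) (p : ι) :
    ∃ n : Matrix ι ι F, IsUnit n ∧ n p = a ∧ ∀ i, i ≠ p → i ≠ r → n i = Pi.single i 1 := by
  refine ⟨(updateRow 1 r a).submatrix (Equiv.swap p r) id, ?_, ?_, fun i hip hir ↦ ?_⟩
  · rw [isUnit_iff_isUnit_det, det_permute, ← cramer_transpose_apply, transpose_one, cramer_one]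
    exact .mul ((Equiv.Perm.sign (Equiv.swap p r)).isUnit.map (Int.castRingHom F)) (.mk0 _ hr)
  · ext l
    simp
  · ext l
    simp [Equiv.swap_apply_of_ne_of_ne hip hir, hir, one_apply, Pi.single_apply, eq_comm]

section PartialWhittaker

variable {V : Type*} [AddCommGroup V] [Module K V]

/-- The vectors that transform by the generic character given by `ψ` under those unitriangular
matrices whose first `c` columns are trivial. -/
def partialWhittaker (D : Matrix (Fin j) (Fin j) F →* Module.End K V) (ψ : AddChar F K) (c : ℕ) :
    Submodule K V where
  carrier := {v | ∀ u, IsUpperUnitriangular u → HasTrivialColumns c u →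
    D u v = ψ (superdiagSum u) • v}
  add_mem' hv hw u hu huc := by rw [map_add, hv u hu huc, hw u hu huc, smul_add]
  zero_mem' u _ _ := by simp
  smul_mem' a v hv u hu huc := by rw [map_smul, hv u hu huc, smul_comm]

/-- No nonzero vector is fixed by the unipotent radical of a proper parabolic subgroup. -/
def IsCuspidal (D : Matrix (Fin j) (Fin j) F →* Module.End K V) : Prop :=
  ∀ J : Submodule F (Fin j → F), J ≠ ⊥ → J ≠ ⊤ →
    ∀ v, (∀ X ∈ parabolicNilradical J, D (1 + X) v = v) → v = 0

variable {D : Matrix (Fin j) (Fin j) F →* Module.End K V} {ψ : AddChar F K}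

theorem columnTransvection_mem_partialWhittaker (q : Fin j) (x : Fin j → F) {v : V}
    (hv : v ∈ partialWhittaker D ψ (q + 1)) :
    D (columnTransvection q x) v ∈ partialWhittaker D ψ (q + 1) := by
  intro u hu huq
  have hx := isUpperUnitriangular_columnTransvection q x
  have hx' := isUpperUnitriangular_columnTransvection q (-x)
  have hxx : columnTransvection q x * columnTransvection q (-x) = 1 := by
    rw [← columnTransvection_add, add_neg_cancel, columnTransvection_zero]
  have comm : u * columnTransvection q x =
      columnTransvection q x * (columnTransvection q (-x) * (u * columnTransvection q x)) := by
    rw [← mul_assoc, hxx, one_mul]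
  have superdiag : superdiagSum (columnTransvection q (-x) * (u * columnTransvection q x)) =
      superdiagSum u := by
    rw [superdiagSum_mul hx' (hu.mul hx), superdiagSum_mul hu hx, add_comm, add_assoc,
      ← superdiagSum_mul hx hx', hxx, superdiagSum_one, add_zero]
  rw [← Module.End.mul_apply, ← map_mul, comm, map_mul, Module.End.mul_apply,
    hv _ (hx'.mul (hu.mul hx)) (huq.conj_columnTransvection x), map_smul, superdiag]

theorem mem_partialWhittaker_of_columnTransvection {q : Fin j} {v : V}
    (hv : v ∈ partialWhittaker D ψ (q + 1))
    (h : ∀ x, D (columnTransvection q x) v = ψ (superdiagSum (columnTransvection q x)) • v) :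
    v ∈ partialWhittaker D ψ q := by
  intro u hu huq
  obtain ⟨u', hu', hu'q, hu_eq⟩ := hu.exists_eq_columnTransvection_mul huq
  rw [hu_eq, map_mul, Module.End.mul_apply, hv u' hu' hu'q, map_smul, h,
    superdiagSum_mul (isUpperUnitriangular_columnTransvection q _) hu', AddChar.map_add_eq_mul,
    smul_smul, mul_comm]

theorem map_mem_partialWhittaker {q : Fin j} {v : V} (hv : v ∈ partialWhittaker D ψ (q + 1))
    {n m : Matrix (Fin j) (Fin j) F} (hnm : n * m = 1) (hn : ∀ i, q ≤ i → n i = Pi.single i 1) :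
    D n v ∈ partialWhittaker D ψ (q + 1) := by
  intro u hu huq
  obtain ⟨u', hu', hu'q, hsum, hcomm⟩ := hu.exists_mul_eq_mul huq hnm hn
  rw [← Module.End.mul_apply, ← map_mul, hcomm, map_mul, Module.End.mul_apply, hv u' hu' hu'q,
    map_smul, hsum]

theorem IsCuspidal.eq_zero_of_columnTransvection (hD : IsCuspidal D) {p q : Fin j}
    (hpq : (p : ℕ) + 1 = q) {v : V} (hv : v ∈ partialWhittaker D ψ (q + 1))
    (h : ∀ x, D (columnTransvection q x) v = v) : v = 0 := by
  have hJ : Pi.single p 1 ∈ vectorsSupportedBelow (F := F) q :=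
    single_mem_vectorsSupportedBelow (Fin.lt_def.2 (by omega))
  refine hD (vectorsSupportedBelow q) (fun hbot ↦ ?_) (fun htop ↦ ?_) v fun X hX ↦ ?_
  · have := (Submodule.mem_bot F).1 (hbot ▸ hJ)
    simpa using congrFun this p
  · have : Pi.single q 1 ∈ vectorsSupportedBelow (F := F) q := htop ▸ Submodule.mem_top
    simpa using this q le_rfl
  · obtain ⟨hu, huq⟩ := isUpperUnitriangular_one_add_of_mem_parabolicNilradical hX
    obtain ⟨u', hu', hu'q, hX_eq⟩ := hu.exists_eq_columnTransvection_mul huq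
    have hsum : superdiagSum u' = 0 := by
      have hX_sum := congrArg superdiagSum hX_eq
      rw [superdiagSum_mul (isUpperUnitriangular_columnTransvection q _) hu',
        superdiagSum_columnTransvection hpq,
        superdiagSum_one_add_of_mem_parabolicNilradical hpq hX] at hX_sum
      have hne : p ≠ q := fun h ↦ by simp [h] at hpq
      simpa [one_apply_ne hne] using hX_sum
    rw [hX_eq, map_mul, Module.End.mul_apply, hv u' hu' hu'q, hsum, AddChar.map_zero_eq_one,
      one_smul, h]

theorem IsCuspidal.exists_columnTransvection_eigenvector [Finite F] [CharZero K]
    (hD : IsCuspidal D) (hψ : ψ ≠ 1) {p q : Fin j} (hpq : (p : ℕ) + 1 = q)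
    (h : partialWhittaker D ψ (q + 1) ≠ ⊥) :
    ∃ v ∈ partialWhittaker D ψ (q + 1), v ≠ 0 ∧ ∃ a : Fin j → F, (∃ r < q, a r ≠ 0) ∧
      ∀ x, D (columnTransvection q x) v = ψ (a ⬝ᵥ (Set.Iio q).indicator x) • v := by
  obtain ⟨a, v, hv, hv₀, ha⟩ := exists_addChar_eigenvector hψ
    (c := fun x ↦ D (columnTransvection q x)) (by rw [columnTransvection_zero, map_one])
    (fun x y ↦ by rw [columnTransvection_add, map_mul]) h
    fun x v hv ↦ columnTransvection_mem_partialWhittaker q x hv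
  have h_indicator x : a ⬝ᵥ (Set.Iio q).indicator x =
      (Set.Iio q).indicator a ⬝ᵥ (Set.Iio q).indicator x := by
    refine Finset.sum_congr rfl fun i _ ↦ ?_
    by_cases hi : i ∈ Set.Iio q <;> simp [hi]
  have ha' x : D (columnTransvection q x) v =
      ψ ((Set.Iio q).indicator a ⬝ᵥ (Set.Iio q).indicator x) • v := by
    have h := ha ((Set.Iio q).indicator x)
    rwa [columnTransvection, Set.indicator_indicator, Set.inter_self, ← columnTransvection,
      h_indicator] at h
  refine ⟨v, hv, hv₀, (Set.Iio q).indicator a, ?_, ha'⟩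
  by_contra! ha₀
  refine hv₀ (hD.eq_zero_of_columnTransvection hpq hv fun x ↦ ?_)
  have : (Set.Iio q).indicator a = 0 := by
    ext i
    rcases lt_or_ge i q with hi | hi
    · exact ha₀ i hi
    · simp [hi]
  rw [ha', this, zero_dotProduct, AddChar.map_zero_eq_one, one_smul]

theorem IsCuspidal.partialWhittaker_ne_bot_of_succ [Finite F] [CharZero K] (hD : IsCuspidal D)
    (hψ : ψ ≠ 1) {q : Fin j} (h : partialWhittaker D ψ (q + 1) ≠ ⊥) :
    partialWhittaker D ψ q ≠ ⊥ := by
  rcases Nat.eq_zero_or_eq_succ_pred q with hq | hq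
  · obtain ⟨v, hv, hv₀⟩ := (Submodule.ne_bot_iff _).1 h
    refine (Submodule.ne_bot_iff _).2
      ⟨v, mem_partialWhittaker_of_columnTransvection hv fun x ↦ ?_, hv₀⟩
    have hIio : Set.Iio q = ∅ := by
      ext i
      simp [Fin.le_def, hq]
    have hx : columnTransvection q x = 1 := by
      rw [columnTransvection, hIio, Set.indicator_empty', zero_vecMulVec, add_zero]
    simp [hx, superdiagSum_one]
  let p : Fin j := ⟨q - 1, by omega⟩
  have hpq : (p : ℕ) + 1 = q := by simp only [p]; omega
  obtain ⟨v, hv, hv₀, a, ⟨r, hr, har⟩, hav⟩ := hD.exists_columnTransvection_eigenvector hψ hpq h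
  obtain ⟨n, hn_unit, hnp, hn⟩ := exists_isUnit_row_eq har p
  obtain ⟨m, hnm⟩ := hn_unit.exists_right_inv
  have hn (i) (hi : q ≤ i) : n i = Pi.single i 1 :=
    hn i (by rintro rfl; rw [Fin.le_def] at hi; omega) (hr.trans_le hi).ne'
  refine (Submodule.ne_bot_iff _).2
    ⟨D n v, mem_partialWhittaker_of_columnTransvection (map_mem_partialWhittaker hv hnm hn)
      fun x ↦ ?_, fun hnv ↦ hv₀ ?_⟩
  · obtain ⟨y, hxy, hcomm⟩ := exists_columnTransvection_mul_eq hnm hn x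
    have hay : a ⬝ᵥ (Set.Iio q).indicator y = x p := by
      have hp : p < q := by rw [Fin.lt_def]; omega
      rw [← hnp, ← Set.indicator_of_mem (s := Set.Iio q) hp x, ← hxy, mulVec]
    rw [← Module.End.mul_apply, ← map_mul, hcomm, map_mul, Module.End.mul_apply, hav, hay, map_smul,
      superdiagSum_columnTransvection hpq]
  · rw [← Module.End.one_apply (R := K) v, ← map_one D, ← mul_eq_one_comm.1 hnm, map_mul,
      Module.End.mul_apply, hnv, map_zero]

theorem IsCuspidal.exists_whittakerVector [Finite F] [CharZero K] [Nontrivial V]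
    (hD : IsCuspidal D) (hψ : ψ ≠ 1) :
    ∃ v ≠ 0, ∀ u, IsUpperUnitriangular u → D u v = ψ (superdiagSum u) • v := by
  have partialWhittaker_ne_bot (c : ℕ) (hc : c ≤ j) : partialWhittaker D ψ c ≠ ⊥ := by
    induction hc using Nat.decreasingInduction with
    | self =>
      obtain ⟨v, hv₀⟩ := exists_ne (0 : V)
      refine (Submodule.ne_bot_iff _).2 ⟨v, fun u _ huj ↦ ?_, hv₀⟩
      obtain rfl : u = 1 := Matrix.ext fun i l ↦ huj i l l.2
      simp [superdiagSum_one]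
    | of_succ c hc ih => exact hD.partialWhittaker_ne_bot_of_succ hψ (q := ⟨c, hc⟩) ih
  obtain ⟨v, hv, hv₀⟩ := (Submodule.ne_bot_iff _).1 (partialWhittaker_ne_bot 0 j.zero_le)
  exact ⟨v, hv₀, fun u hu ↦ hv u hu fun i l hl ↦ absurd hl l.val.not_lt_zero⟩

end PartialWhittaker

end WhittakerVector

section IrreducibleRepresentation

variable {K G V : Type*} [Field K] [Group G] [AddCommGroup V] [Module K V]
  {ρ : Representation K G V}

theorem isIrreducible_of_forall_submodule [Nontrivial V]
    (hρ : ∀ W : Submodule K V, (∀ g, W ≤ W.comap (ρ g)) → W = ⊥ ∨ W = ⊤) :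
    ρ.IsIrreducible where
  exists_pair_ne := ⟨⊥, ⊤, fun h ↦ bot_ne_top (congrArg Subrepresentation.toSubmodule h)⟩
  eq_bot_or_eq_top W :=
    (hρ W.toSubmodule fun g _ hw ↦ W.apply_mem_toSubmodule g hw).imp
      (fun h ↦ Subrepresentation.toSubmodule_injective h)
      (fun h ↦ Subrepresentation.toSubmodule_injective h)

theorem exists_isIrreducible_quotient [FiniteDimensional K V] [Nontrivial V]
    (ρ : Representation K G V) :
    ∃ (W : Submodule K V) (hW : ∀ g, W ≤ W.comap (ρ g)), (ρ.quotient W hW).IsIrreducible := by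
  have : IsCoatomic (Subrepresentation ρ) :=
    have : Module.Finite K ρ.asModule := ‹FiniteDimensional K V›
    have : Module.Finite (MonoidAlgebra K G) ρ.asModule := .of_restrictScalars_finite K _ _
    Subrepresentation.subrepresentationSubmoduleOrderIso.isCoatomic_iff.2 inferInstance
  obtain h | ⟨M, hM, -⟩ := eq_top_or_exists_le_coatom (⊥ : Subrepresentation ρ)
  · exact absurd (congrArg Subrepresentation.toSubmodule h) bot_ne_top
  refine ⟨M.toSubmodule, fun g _ hw ↦ M.apply_mem_toSubmodule g hw, ?_⟩
  have : Nontrivial (V ⧸ M.toSubmodule) := Submodule.Quotient.nontrivial_iff.2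
    fun h ↦ hM.1 (Subrepresentation.toSubmodule_injective h)
  refine isIrreducible_of_forall_submodule fun W hW ↦ ?_
  let N : Subrepresentation ρ := ⟨W.comap M.toSubmodule.mkQ, fun g v hv ↦ hW g hv⟩
  have hMN : M ≤ N := Submodule.le_comap_mkQ M.toSubmodule W
  have map_comap : W = (W.comap M.toSubmodule.mkQ).map M.toSubmodule.mkQ :=
    (Submodule.map_comap_eq_of_surjective M.toSubmodule.mkQ_surjective W).symm
  rcases hM.le_iff.1 hMN with hN | hN
  · have comap_eq : W.comap M.toSubmodule.mkQ = ⊤ := congrArg Subrepresentation.toSubmodule hN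
    exact .inr (by rw [map_comap, comap_eq, Submodule.map_top, Submodule.range_mkQ])
  · have comap_eq : W.comap M.toSubmodule.mkQ = M.toSubmodule :=
      congrArg Subrepresentation.toSubmodule hN
    exact .inl (by rw [map_comap, comap_eq, Submodule.mkQ_map_self])

theorem asAlgebraHom_surjective_of_isIrreducible [IsAlgClosed K] [FiniteDimensional K V]
    [ρ.IsIrreducible] : Function.Surjective ρ.asAlgebraHom := by
  classical
  intro x
  have hb : Function.Bijective (algebraMap K (Module.End (MonoidAlgebra K G) ρ.asModule)) :=
    have : FiniteDimensional K ρ.asModule := ‹FiniteDimensional K V›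
    IsSimpleModule.algebraMap_end_bijective_of_isAlgClosed K
  let f : Module.End (Module.End (MonoidAlgebra K G) ρ.asModule) ρ.asModule :=
    { toFun := x
      map_add' := map_add x
      map_smul' := fun φ m ↦ by
        obtain ⟨c, rfl⟩ := hb.2 φ
        exact map_smul x c m }
  obtain ⟨r, hr⟩ := jacobson_density f (Finset.univ.image (Module.finBasis K V) : Finset V)
  exact ⟨r, (Module.finBasis K V).ext fun i ↦
    (hr _ (Finset.mem_image_of_mem _ (Finset.mem_univ i))).symm⟩

theorem span_range_eq_top_of_isIrreducible [IsAlgClosed K] [FiniteDimensional K V]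
    [ρ.IsIrreducible] : Submodule.span K (Set.range ρ) = ⊤ := by
  refine eq_top_iff.2 fun x _ ↦ ?_
  obtain ⟨r, rfl⟩ := asAlgebraHom_surjective_of_isIrreducible (ρ := ρ) x
  induction r using MonoidAlgebra.induction_on with
  | of g => simpa using Submodule.subset_span (Set.mem_range_self g)
  | add a b ha hb => simpa using add_mem (ha trivial) (hb trivial)
  | smul c a ha => simpa using Submodule.smul_mem _ c (ha trivial)

theorem nontrivial_of_isIrreducible (ρ : Representation K G V) [ρ.IsIrreducible] :
    Nontrivial V := by
  by_contra h
  have := not_nontrivial_iff_subsingleton.1 h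
  exact bot_ne_top (α := Subrepresentation ρ)
    (Subrepresentation.toSubmodule_injective (Subsingleton.elim _ _))

end IrreducibleRepresentation

section ContravariantForm

/-- An involutive anti-automorphism of a group, such as transposition on `GL n F`. -/
structure IsAntiInvolution {G : Type*} [Group G] (s : G → G) : Prop where
  map_mul : ∀ g h, s (g * h) = s h * s g
  involutive : Function.Involutive s

theorem IsAntiInvolution.map_one {G : Type*} [Group G] {s : G → G} (hs : IsAntiInvolution s) :
    s 1 = 1 := by
  simpa using (hs.map_mul 1 1).symm

variable {K G V : Type*} [Field K] [Group G] [AddCommGroup V] [Module K V]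
  {ρ : Representation K G V} {s : G → G} {B : V →ₗ[K] V →ₗ[K] K}

/-- A bilinear form for which `ρ (s g)` is the adjoint of `ρ g`, where `s` is an anti-involution
of the group. -/
def IsContravariant (ρ : Representation K G V) (s : G → G) (B : V →ₗ[K] V →ₗ[K] K) : Prop :=
  ∀ g v w, B (ρ g v) w = B v (ρ (s g) w)

theorem IsContravariant.flip (hs : IsAntiInvolution s) (hB : IsContravariant ρ s B) :
    IsContravariant ρ s B.flip := fun g v w ↦ by
  rw [LinearMap.flip_apply, LinearMap.flip_apply, hB, hs.involutive]

theorem IsContravariant.sub {C : V →ₗ[K] V →ₗ[K] K} (hB : IsContravariant ρ s B)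
    (hC : IsContravariant ρ s C) : IsContravariant ρ s (B - C) := fun g v w ↦ by
  simp [hB g, hC g]

theorem IsContravariant.injective [ρ.IsIrreducible] (hB : IsContravariant ρ s B) (hB₀ : B ≠ 0) :
    Function.Injective B := by
  let N : Subrepresentation ρ := ⟨LinearMap.ker B, fun g v hv ↦ by
    ext w
    rw [hB, LinearMap.mem_ker.1 hv, LinearMap.zero_apply, LinearMap.zero_apply]⟩
  rcases eq_bot_or_eq_top N with hN | hN
  · exact LinearMap.ker_eq_bot.1 (congrArg Subrepresentation.toSubmodule hN)
  · exact absurd (LinearMap.ker_eq_top.1 (congrArg Subrepresentation.toSubmodule hN)) hB₀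

/-- The action of `g` on the dual space by the transpose of `ρ (s g)`; intertwining maps from `ρ`
to it are the contravariant forms. -/
def twistedDual (ρ : Representation K G V) (hs : IsAntiInvolution s) :
    Representation K G (Module.Dual K V) where
  toFun g := Module.Dual.transpose (ρ (s g))
  map_one' := by rw [hs.map_one, map_one]; rfl
  map_mul' g h := by rw [hs.map_mul, map_mul]; rfl

theorem exists_isContravariant_ne_zero [CharZero K] [Finite G] [FiniteDimensional K V]
    [Nontrivial V] (hs : IsAntiInvolution s) (hρ : ∀ g, ρ.character (s g) = ρ.character g) :
    ∃ B, B ≠ 0 ∧ IsContravariant ρ s B := by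
  have := Fintype.ofFinite G
  have := invertibleOfNonzero (Nat.cast_ne_zero (R := K).2 Nat.card_pos.ne' : (Nat.card G : K) ≠ 0)
  have character_twistedDual : (twistedDual ρ hs).character = ρ.character :=
    funext fun g ↦ (LinearMap.trace_transpose' _).trans (hρ g)
  have finrank_eq : Module.finrank K (ρ.IntertwiningMap (twistedDual ρ hs)) =
      Module.finrank K (ρ.IntertwiningMap ρ) := by
    have h := ρ.card_inv_mul_sum_char_mul_char_eq_finrank (twistedDual ρ hs)
    rw [character_twistedDual, ρ.card_inv_mul_sum_char_mul_char_eq_finrank ρ] at h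
    exact_mod_cast h.symm
  have : FiniteDimensional K (ρ.IntertwiningMap ρ) :=
    Module.Finite.equiv (Representation.invariantsEquivIntertwiningMap ρ ρ)
  have : Nontrivial (ρ.IntertwiningMap ρ) := by
    obtain ⟨v, hv⟩ := exists_ne (0 : V)
    exact ⟨.id ρ, 0, fun h ↦ hv (DFunLike.congr_fun h v)⟩
  have : Nontrivial (ρ.IntertwiningMap (twistedDual ρ hs)) :=
    Module.nontrivial_of_finrank_pos (R := K) (finrank_eq ▸ Module.finrank_pos)
  obtain ⟨B, hB⟩ := exists_ne (0 : ρ.IntertwiningMap (twistedDual ρ hs))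
  refine ⟨B.toLinearMap, fun h ↦ hB (Representation.IntertwiningMap.ext h), fun g v w ↦ ?_⟩
  exact LinearMap.congr_fun (B.isIntertwining ρ _ g v) w

end ContravariantForm

section SymmetricForms

universe u

variable {K : Type u} [Field K] {G : Type*} [Group G] {s : G → G}

/-- No irreducible representation of `G` over `K` carries a nonzero skew-symmetric contravariant
form. -/
def NoSkewForms (K : Type u) [Field K] {G : Type*} [Group G] (s : G → G) : Prop :=
  ∀ (V : Type u) [AddCommGroup V] [Module K V] [FiniteDimensional K V]
    (ρ : Representation K G V) [ρ.IsIrreducible] (B : V →ₗ[K] V →ₗ[K] K),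
    IsContravariant ρ s B → (∀ v w, B v w = -B w v) → B = 0

/-- Every nonzero representation of `G` over `K` carries a nonzero symmetric contravariant form. -/
def HasSymmetricForms (K : Type u) [Field K] {G : Type*} [Group G] (s : G → G) : Prop :=
  ∀ (V : Type u) [AddCommGroup V] [Module K V] [FiniteDimensional K V] [Nontrivial V]
    (ρ : Representation K G V),
    ∃ B : V →ₗ[K] V →ₗ[K] K, B ≠ 0 ∧ IsContravariant ρ s B ∧ ∀ v w, B v w = B w v

theorem NoSkewForms.hasSymmetricForms [CharZero K] [Finite G] (h : NoSkewForms K s)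
    (hs : IsAntiInvolution s) (hconj : ∀ g, IsConj g (s g)) : HasSymmetricForms K s := by
  intro V _ _ _ _ ρ
  obtain ⟨W, hW, hτ⟩ := exists_isIrreducible_quotient ρ
  set τ := ρ.quotient W hW
  have : Nontrivial (V ⧸ W) := nontrivial_of_isIrreducible τ
  obtain ⟨B, hB₀, hB⟩ := exists_isContravariant_ne_zero (ρ := τ) hs fun g ↦ by
    obtain ⟨x, hx⟩ := isConj_iff.1 (hconj g)
    rw [← hx, Representation.char_conj]
  have hflip : B - B.flip = 0 := h (V ⧸ W) τ _ (hB.sub (hB.flip hs)) fun v w ↦ by simp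
  have hsymm : ∀ v w, B v w = B w v := fun v w ↦
    sub_eq_zero.1 (LinearMap.congr_fun₂ hflip v w)
  refine ⟨B.compl₁₂ W.mkQ W.mkQ, fun h₀ ↦ hB₀ ?_, fun g v w ↦ hB g (W.mkQ v) (W.mkQ w),
    fun v w ↦ hsymm _ _⟩
  refine LinearMap.ext₂ fun v w ↦ ?_
  obtain ⟨v, rfl⟩ := W.mkQ_surjective v
  obtain ⟨w, rfl⟩ := W.mkQ_surjective w
  exact LinearMap.congr_fun₂ h₀ v w

end SymmetricForms

section AveragedCoefficient

variable {K H V : Type*} [Field K] [Group H] [AddCommGroup V] [Module K V]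
  {σ : Representation K H V} {s : H → H} {B : V →ₗ[K] V →ₗ[K] K}

/-- The matrix coefficient of an endomorphism between `v` and `w` with respect to the form `B`,
averaged over conjugation by `H`. For a contravariant `B` it is invariant under conjugation by the
image of `H`. -/
def averagedCoeff [Fintype H] (σ : Representation K H V) (s : H → H) (B : V →ₗ[K] V →ₗ[K] K)
    (v w : V) : Module.End K V →ₗ[K] K :=
  ∑ h, B (σ (s h) v) ∘ₗ LinearMap.applyₗ (σ h⁻¹ w)

variable [Fintype H]

theorem averagedCoeff_apply (v w : V) (x : Module.End K V) :
    averagedCoeff σ s B v w x = ∑ h, B (σ (s h) v) (x (σ h⁻¹ w)) := by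
  simp [averagedCoeff]

theorem averagedCoeff_conj (hs : IsAntiInvolution s) (hB : IsContravariant σ s B) (v w : V) (h : H)
    (x : Module.End K V) :
    averagedCoeff σ s B v w (σ h * x * σ h⁻¹) = averagedCoeff σ s B v w x := by
  simp only [averagedCoeff_apply]
  refine Fintype.sum_equiv (Equiv.mulRight h) _ _ fun g ↦ ?_
  simp only [Equiv.coe_mulRight, hs.map_mul, _root_.mul_inv_rev, map_mul, Module.End.mul_apply]
  rw [hB (s h), hs.involutive]

theorem averagedCoeff_eq_neg_of_adjoint (hs : IsAntiInvolution s) (hskew : ∀ v w, B v w = -B w v)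
    {x y : Module.End K V} (hxy : ∀ v w, B (x v) w = B v (y w)) (v w : V) :
    averagedCoeff σ s B v w y = -averagedCoeff σ s B w v x := by
  simp only [averagedCoeff_apply, ← Finset.sum_neg_distrib]
  refine Fintype.sum_equiv ((Equiv.inv H).trans hs.involutive.toPerm) _ _ fun h ↦ ?_
  have inv_map : (s h⁻¹)⁻¹ = s h := inv_eq_of_mul_eq_one_left (by
    rw [← hs.map_mul, inv_mul_cancel, hs.map_one])
  simp only [Equiv.trans_apply, Equiv.inv_apply, Function.Involutive.coe_toPerm, hs.involutive h⁻¹,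
    inv_map]
  rw [← hxy, hskew]

theorem averagedCoeff_eq_card_mul {β : V →ₗ[K] V →ₗ[K] K} {x : Module.End K V}
    (hx : ∀ v w, B v (x w) = β v w) {v w : V}
    (hβ : ∀ h, β (σ (s h) v) (σ h⁻¹ w) = β v w) :
    averagedCoeff σ s B v w x = Nat.card H * β v w := by
  simp [averagedCoeff_apply, hx, hβ]

theorem exists_end_apply_eq [FiniteDimensional K V] (hskew : ∀ v w, B v w = -B w v)
    (hB : Function.Injective B) (β : V →ₗ[K] V →ₗ[K] K) :
    ∃ x : Module.End K V, ∀ v w, B v (x w) = β v w := by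
  have hflip : Function.Injective B.flip := by
    have : B.flip = -B := LinearMap.ext₂ fun v w ↦ hskew w v
    rw [this]
    exact neg_injective.comp hB
  let L := LinearEquiv.ofInjectiveOfFinrankEq B.flip hflip Subspace.dual_finrank_eq.symm
  exact ⟨L.symm.toLinearMap ∘ₗ β.flip, fun v w ↦
    LinearMap.congr_fun (L.apply_symm_apply (β.flip w)) v⟩

/-- The form `β` is itself an averaged coefficient, namely that of `x` with `B v (x w) = β v w`. -/
theorem eq_zero_of_averagedCoeff_eq_neg [CharZero K] [FiniteDimensional K V]
    (hskew : ∀ v w, B v w = -B w v) (hB : Function.Injective B)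
    {E : Submodule K V} (hE : ∀ h, E ≤ E.comap (σ h))
    (hcoeff : ∀ v ∈ E, ∀ w ∈ E, ∀ x, averagedCoeff σ s B v w x = -averagedCoeff σ s B w v x)
    {β : E →ₗ[K] E →ₗ[K] K} (hβ : IsContravariant (σ.subrepresentation E hE) s β)
    (hs : IsAntiInvolution s) (hsymm : ∀ v w, β v w = β w v) : β = 0 := by
  obtain ⟨p, hp⟩ := E.subtype.exists_leftInverse_of_injective E.ker_subtype
  obtain ⟨x, hx⟩ := exists_end_apply_eq hskew hB (β.compl₁₂ p p)
  have p_apply (v : E) : p v = v := LinearMap.congr_fun hp v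
  have coeff_eq (v w : E) : averagedCoeff σ s B v w x = Nat.card H * β v w := by
    rw [averagedCoeff_eq_card_mul hx, LinearMap.compl₁₂_apply, p_apply, p_apply]
    intro h
    have hv : σ (s h) v = (σ.subrepresentation E hE (s h) v : V) := rfl
    have hw : σ h⁻¹ w = (σ.subrepresentation E hE h⁻¹ w : V) := rfl
    rw [LinearMap.compl₁₂_apply, LinearMap.compl₁₂_apply, hv, hw, p_apply, p_apply, p_apply,
      p_apply, hβ, hs.involutive, ← Module.End.mul_apply, ← map_mul, mul_inv_cancel, map_one,
      Module.End.one_apply]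
  have hcard : (Nat.card H : K) ≠ 0 := Nat.cast_ne_zero.2 Nat.card_pos.ne'
  refine LinearMap.ext₂ fun v w ↦ self_eq_neg.1 (mul_left_cancel₀ hcard ?_)
  have h := hcoeff v v.2 w w.2 x
  rwa [coeff_eq, coeff_eq, hsymm w v, ← mul_neg] at h

end AveragedCoefficient

section GeneralLinearGroup

variable {F ι : Type*} [Field F] [Fintype ι] [DecidableEq ι]

/-- Transposition as an anti-involution of the general linear group. -/
def glTranspose (g : GL ι F) : GL ι F where
  val := (g : Matrix ι ι F)ᵀ
  inv := (g⁻¹ : GL ι F).1ᵀ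
  val_inv := by rw [← transpose_mul, Units.inv_mul, transpose_one]
  inv_val := by rw [← transpose_mul, Units.mul_inv, transpose_one]

theorem coe_glTranspose (g : GL ι F) : (glTranspose g : Matrix ι ι F) = (g : Matrix ι ι F)ᵀ := rfl

theorem isAntiInvolution_glTranspose : IsAntiInvolution (glTranspose (F := F) (ι := ι)) where
  map_mul _ _ := Units.ext (transpose_mul _ _)
  involutive _ := Units.ext (transpose_transpose _)

theorem isConj_glTranspose (g : GL ι F) : IsConj g (glTranspose g) := by
  obtain ⟨S, hS, h⟩ := exists_isUnit_mul_eq_transpose_mul (g : Matrix ι ι F)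
  exact isConj_iff.2 ⟨hS.unit, mul_inv_eq_of_eq_mul (Units.ext h)⟩

end GeneralLinearGroup

section WhittakerSpace

variable {F K V : Type*} [Field F] [Field K] [AddCommGroup V] [Module K V]
  {κ : Type*} [Fintype κ] [DecidableEq κ] {j : ℕ}
  {D : Matrix (κ ⊕ Fin j) (κ ⊕ Fin j) F →* Module.End K V} {ψ : AddChar F K}

/-- The vectors fixed by all shears: the Jacquet module of the representation given by `D` with
respect to the parabolic subgroup stabilizing `F ^ κ`. -/
def shearInvariants (D : Matrix (κ ⊕ Fin j) (κ ⊕ Fin j) F →* Module.End K V) : Submodule K V :=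
  ⨅ X : Matrix κ (Fin j) F, LinearMap.eqLocus (D (shear X)) 1

theorem mem_shearInvariants {v : V} : v ∈ shearInvariants D ↔ ∀ X, D (shear X) v = v := by
  simp [shearInvariants]

theorem shear_mul_diagRight (X : Matrix κ (Fin j) F) (u : Matrix (Fin j) (Fin j) F) :
    shear X * diagRight κ u = diagRight κ u * shear (X * u) := by
  simp [shear, diagRight, fromBlocks_multiply]

theorem diagRight_mem_shearInvariants {v : V} (hv : v ∈ shearInvariants D)
    (u : Matrix (Fin j) (Fin j) F) : D (diagRight κ u) v ∈ shearInvariants D := by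
  rw [mem_shearInvariants] at hv ⊢
  intro X
  rw [← Module.End.mul_apply, ← map_mul, shear_mul_diagRight, map_mul, Module.End.mul_apply, hv]

/-- The action of the second Levi factor on the Jacquet module. -/
def shearInvariantsHom (D : Matrix (κ ⊕ Fin j) (κ ⊕ Fin j) F →* Module.End K V) :
    Matrix (Fin j) (Fin j) F →* Module.End K (shearInvariants D) where
  toFun u := (D (diagRight κ u)).restrict fun _ hv ↦ diagRight_mem_shearInvariants hv u
  map_one' := LinearMap.ext fun v ↦ Subtype.ext <| by
    simp [diagRight, LinearMap.restrict_apply]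
  map_mul' u u' := LinearMap.ext fun v ↦ Subtype.ext <| by
    have h : diagRight κ (u * u') = diagRight κ u * diagRight κ u' := by
      simp [diagRight, fromBlocks_multiply]
    simp [h, LinearMap.restrict_apply]

theorem coe_shearInvariantsHom_apply (u : Matrix (Fin j) (Fin j) F) (v : shearInvariants D) :
    (shearInvariantsHom D u v : V) = D (diagRight κ u) v := rfl

/-- The vectors of the Jacquet module on which the unitriangular matrices in the last `j`
coordinates act by the generic character given by `ψ`. -/
def whittakerSpace (D : Matrix (κ ⊕ Fin j) (κ ⊕ Fin j) F →* Module.End K V) (ψ : AddChar F K) :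
    Submodule K V :=
  shearInvariants D ⊓ ⨅ u : {u : Matrix (Fin j) (Fin j) F // IsUpperUnitriangular u},
    LinearMap.eqLocus (D (diagRight κ u.1)) (ψ (superdiagSum u.1) • 1)

theorem mem_whittakerSpace {v : V} :
    v ∈ whittakerSpace D ψ ↔ v ∈ shearInvariants D ∧
      ∀ u, IsUpperUnitriangular u → D (diagRight κ u) v = ψ (superdiagSum u) • v := by
  simp [whittakerSpace]

theorem whittakerSpace_ne_bot [Finite F] [CharZero K] (hD : shearInvariants D ≠ ⊥)
    (hcusp : IsCuspidal (shearInvariantsHom D)) (hψ : ψ ≠ 1) : whittakerSpace D ψ ≠ ⊥ := by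
  have := (shearInvariants D).nontrivial_iff_ne_bot.2 hD
  obtain ⟨v, hv₀, hv⟩ := hcusp.exists_whittakerVector hψ
  refine (whittakerSpace D ψ).ne_bot_iff.2 ⟨v, mem_whittakerSpace.2 ⟨v.2, fun u hu ↦ ?_⟩, by simpa⟩
  exact congrArg Subtype.val (hv u hu)

/-- The action of the first Levi factor `GL κ`. -/
def diagLeftRep (D : Matrix (κ ⊕ Fin j) (κ ⊕ Fin j) F →* Module.End K V) :
    Representation K (GL κ F) V where
  toFun g := D (diagLeft j g.1)
  map_one' := by rw [Units.val_one, diagLeft_one, map_one]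
  map_mul' g h := by rw [Units.val_mul, ← diagLeft_mul, map_mul]

theorem diagLeftRep_apply (g : GL κ F) : diagLeftRep D g = D (diagLeft j g.1) := rfl

theorem diagLeftRep_mem_whittakerSpace (g : GL κ F) :
    whittakerSpace D ψ ≤ (whittakerSpace D ψ).comap (diagLeftRep D g) := by
  intro v hv
  obtain ⟨hshear, hψ⟩ := mem_whittakerSpace.1 hv
  rw [mem_shearInvariants] at hshear
  refine mem_whittakerSpace.2 ⟨mem_shearInvariants.2 fun X ↦ ?_, fun u hu ↦ ?_⟩
  · have h : shear X * diagLeft j g.1 = diagLeft j g.1 * shear ((g⁻¹).1 * X) := by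
      rw [diagLeft_mul_shear, ← Matrix.mul_assoc, Units.mul_inv, Matrix.one_mul]
    rw [diagLeftRep_apply, ← Module.End.mul_apply, ← map_mul, h, map_mul, Module.End.mul_apply,
      hshear]
  · rw [diagLeftRep_apply, ← Module.End.mul_apply, ← map_mul, ← diagLeft_mul_diagRight, map_mul,
      Module.End.mul_apply, hψ u hu, map_smul]

theorem IsCuspidal.sum_parabolicNilradical_eq_zero
    {D : Matrix (Fin j) (Fin j) F →* Module.End K V} (hD : IsCuspidal D)
    {J : Submodule F (Fin j → F)} (hJ : J ≠ ⊥) (hJ' : J ≠ ⊤)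
    [Fintype (parabolicNilradical J)] (v : V) :
    ∑ X : parabolicNilradical J, D (1 + X.1) v = 0 := by
  refine hD J hJ hJ' _ fun Y hY ↦ ?_
  rw [map_sum]
  refine Fintype.sum_equiv (Equiv.addLeft (⟨Y, hY⟩ : parabolicNilradical J)) _ _ fun X ↦ ?_
  have h : (1 + Y) * (1 + X.1) = 1 + (Y + X.1) := by
    rw [add_mul, mul_add Y, mul_eq_zero_of_mem_parabolicNilradical hY X.2]
    simp [add_comm Y, add_assoc]
  rw [← Module.End.mul_apply, ← map_mul, h]
  rfl

end WhittakerSpace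

section SkewForm

universe u

variable {F K V : Type*} [Field F] [Field K] [AddCommGroup V] [Module K V] {n j : ℕ}
  {D : Matrix (Fin n ⊕ Fin j) (Fin n ⊕ Fin j) F →* Module.End K V} {ψ : AddChar F K}
  {B : V →ₗ[K] V →ₗ[K] K}

theorem isContravariant_diagLeftRep (hB : ∀ M v w, B (D M v) w = B v (D Mᵀ w)) :
    IsContravariant (diagLeftRep D) glTranspose B := fun g v w ↦ by
  rw [diagLeftRep_apply, hB, transpose_diagLeft, ← coe_glTranspose, diagLeftRep_apply]

theorem sum_averagedCoeff_parabolicNilradical_eq_zero [Fintype (GL (Fin n) F)]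
    (hcusp : IsCuspidal (shearInvariantsHom D)) {w : V} (hw : w ∈ whittakerSpace D ψ) (v : V)
    (M : Matrix (Fin n ⊕ Fin j) (Fin n ⊕ Fin j) F) {J : Submodule F (Fin j → F)} (hJ : J ≠ ⊥)
    (hJ' : J ≠ ⊤) [Fintype (parabolicNilradical J)] :
    ∑ X : parabolicNilradical J,
      averagedCoeff (diagLeftRep D) glTranspose B v w (D (M * diagRight (Fin n) (1 + X.1))) =
        0 := by
  simp only [averagedCoeff_apply, map_mul, Module.End.mul_apply]
  rw [Finset.sum_comm]
  refine Finset.sum_eq_zero fun g _ ↦ ?_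
  have hw' := (mem_whittakerSpace.1 (diagLeftRep_mem_whittakerSpace g⁻¹ hw)).1
  have h := congrArg Subtype.val (hcusp.sum_parabolicNilradical_eq_zero hJ hJ' ⟨_, hw'⟩)
  simp only [Submodule.coe_sum, coe_shearInvariantsHom_apply] at h
  rw [← map_sum, ← map_sum, h]
  simp

theorem isWhittakerKernel_averagedCoeff [Finite F] [CharZero K] [Fintype (GL (Fin n) F)]
    (hD : ∀ M, ¬ IsUnit M → D M = 0) (hB : ∀ M v w, B (D M v) w = B v (D Mᵀ w))
    (hcusp : IsCuspidal (shearInvariantsHom D)) {v w : V} (hv : v ∈ whittakerSpace D ψ)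
    (hw : w ∈ whittakerSpace D ψ) :
    IsWhittakerKernel ψ fun M ↦ averagedCoeff (diagLeftRep D) glTranspose B v w (D M) where
  eq_zero_of_not_isUnit M hM := by simp only [hD M hM, map_zero]
  mul_shear M X := by
    simp only [averagedCoeff_apply, map_mul, Module.End.mul_apply]
    refine Fintype.sum_congr _ _ fun g ↦ ?_
    rw [mem_shearInvariants.1 (mem_whittakerSpace.1 (diagLeftRep_mem_whittakerSpace _ hw)).1]
  transpose_shear_mul M X := by
    simp only [averagedCoeff_apply, map_mul, Module.End.mul_apply, ← hB]
    refine Fintype.sum_congr _ _ fun g ↦ ?_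
    rw [mem_shearInvariants.1 (mem_whittakerSpace.1 (diagLeftRep_mem_whittakerSpace _ hv)).1]
  mul_diagRight M u hu := by
    simp only [averagedCoeff_apply, map_mul, Module.End.mul_apply, Finset.smul_sum]
    refine Fintype.sum_congr _ _ fun g ↦ ?_
    rw [(mem_whittakerSpace.1 (diagLeftRep_mem_whittakerSpace _ hw)).2 u hu, map_smul, map_smul]
  transpose_diagRight_mul M u hu := by
    simp only [averagedCoeff_apply, map_mul, Module.End.mul_apply, ← hB, Finset.smul_sum]
    refine Fintype.sum_congr _ _ fun g ↦ ?_
    rw [(mem_whittakerSpace.1 (diagLeftRep_mem_whittakerSpace _ hv)).2 u hu, map_smul,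
      LinearMap.smul_apply]
  conj M h h' hh' := by
    let g : GL (Fin n) F := ⟨h, h', hh', mul_eq_one_comm.1 hh'⟩
    have h : D (diagLeft j h * M * diagLeft j h') = diagLeftRep D g * D M * diagLeftRep D g⁻¹ := by
      rw [map_mul, map_mul]
      rfl
    rw [h, averagedCoeff_conj isAntiInvolution_glTranspose (isContravariant_diagLeftRep hB)]
  eq_zero_of_parabolicNilradical M J hJ hJ' hM := by
    have := Fintype.ofFinite (parabolicNilradical J)
    have h := sum_averagedCoeff_parabolicNilradical_eq_zero (B := B) hcusp hw v M hJ hJ'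
    simp only [hM _ (Subtype.coe_prop _), Finset.sum_const] at h
    simpa using h

theorem averagedCoeff_eq_neg [Finite F] [CharZero K] [Fintype (GL (Fin n) F)]
    (hD : ∀ M, ¬ IsUnit M → D M = 0) (hspan : Submodule.span K (Set.range D) = ⊤)
    (hB : ∀ M v w, B (D M v) w = B v (D Mᵀ w)) (hskew : ∀ v w, B v w = -B w v)
    (hcusp : IsCuspidal (shearInvariantsHom D)) (hψ : ψ ≠ 1) {v w : V}
    (hv : v ∈ whittakerSpace D ψ) (hw : w ∈ whittakerSpace D ψ) (x : Module.End K V) :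
    averagedCoeff (diagLeftRep D) glTranspose B v w x =
      -averagedCoeff (diagLeftRep D) glTranspose B w v x := by
  rw [← LinearMap.neg_apply]
  refine LinearMap.congr_fun (LinearMap.ext_on_range hspan fun M ↦ ?_) x
  calc averagedCoeff (diagLeftRep D) glTranspose B v w (D M)
    _ = averagedCoeff (diagLeftRep D) glTranspose B v w (D Mᵀ) :=
      ((isWhittakerKernel_averagedCoeff hD hB hcusp hv hw).apply_transpose hψ M).symm
    _ = -averagedCoeff (diagLeftRep D) glTranspose B w v (D M) :=
      averagedCoeff_eq_neg_of_adjoint isAntiInvolution_glTranspose hskew (hB M) v w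

theorem not_injective_of_isCuspidal_shearInvariantsHom [Finite F] {K V : Type u} [Field K]
    [AddCommGroup V] [Module K V] [CharZero K] [FiniteDimensional K V]
    {D : Matrix (Fin n ⊕ Fin j) (Fin n ⊕ Fin j) F →* Module.End K V} {ψ : AddChar F K}
    {B : V →ₗ[K] V →ₗ[K] K} (hsymm : HasSymmetricForms K (glTranspose (F := F) (ι := Fin n)))
    (hD : ∀ M, ¬ IsUnit M → D M = 0) (hspan : Submodule.span K (Set.range D) = ⊤)
    (hD' : shearInvariants D ≠ ⊥) (hcusp : IsCuspidal (shearInvariantsHom D)) (hψ : ψ ≠ 1)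
    (hB : ∀ M v w, B (D M v) w = B v (D Mᵀ w)) (hskew : ∀ v w, B v w = -B w v) :
    ¬ Function.Injective B := fun hinj ↦ by
  have := Fintype.ofFinite (GL (Fin n) F)
  have : Nontrivial (whittakerSpace D ψ) :=
    (whittakerSpace D ψ).nontrivial_iff_ne_bot.2 (whittakerSpace_ne_bot hD' hcusp hψ)
  obtain ⟨β, hβ₀, hβ, hβ_symm⟩ := hsymm (whittakerSpace D ψ)
    ((diagLeftRep D).subrepresentation _ diagLeftRep_mem_whittakerSpace)
  exact hβ₀ <| eq_zero_of_averagedCoeff_eq_neg hskew hinj diagLeftRep_mem_whittakerSpace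
    (fun v hv w hw ↦ averagedCoeff_eq_neg hD hspan hB hskew hcusp hψ hv hw) hβ
    isAntiInvolution_glTranspose hβ_symm

end SkewForm

section ExtendByZero

variable {M A : Type*} [Monoid M] [IsDedekindFiniteMonoid M] [MonoidWithZero A]

/-- The extension by zero of a homomorphism defined on units. -/
noncomputable def extendByZero (f : Mˣ →* A) : M →* A where
  toFun x := open Classical in if hx : IsUnit x then f hx.unit else 0
  map_one' := by
    rw [dif_pos isUnit_one, ← map_one f]
    exact congrArg f (Units.ext rfl)
  map_mul' x y := by
    by_cases hxy : IsUnit (x * y)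
    · have hx := isUnit_of_mul_isUnit_left hxy
      have hy := isUnit_of_mul_isUnit_right hxy
      rw [dif_pos hxy, dif_pos hx, dif_pos hy, ← map_mul]
      exact congrArg f (Units.ext rfl)
    · rw [dif_neg hxy]
      by_cases hx : IsUnit x
      · have hy : ¬ IsUnit y := fun hy ↦ hxy (hx.mul hy)
        rw [dif_neg hy, mul_zero]
      · rw [dif_neg hx, zero_mul]

theorem extendByZero_coe (f : Mˣ →* A) (u : Mˣ) : extendByZero f u = f u :=
  (dif_pos u.isUnit).trans (congrArg f (Units.ext rfl))

theorem extendByZero_of_not_isUnit (f : Mˣ →* A) {x : M} (hx : ¬ IsUnit x) :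
    extendByZero f x = 0 :=
  dif_neg hx

end ExtendByZero

section MaximalParabolic

variable {F : Type*} [Field F] {ι κ : Type*} [Fintype ι] [DecidableEq ι] [Fintype κ]
  [DecidableEq κ] {j : ℕ}

/-- The multiplicative isomorphism given by a change of coordinates `P` with inverse `Q`. -/
def matrixConjEquiv (P : Matrix κ ι F) (Q : Matrix ι κ F) (hPQ : P * Q = 1) (hQP : Q * P = 1) :
    Matrix κ κ F ≃* Matrix ι ι F where
  toFun N := Q * N * P
  invFun M := P * M * Q
  left_inv N := by
    simp only [Matrix.mul_assoc, hPQ, Matrix.mul_one]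
    rw [← Matrix.mul_assoc, hPQ, Matrix.one_mul]
  right_inv M := by
    simp only [Matrix.mul_assoc, hQP, Matrix.mul_one]
    rw [← Matrix.mul_assoc, hQP, Matrix.one_mul]
  map_mul' N N' := by
    simp only [Matrix.mul_assoc]
    rw [← Matrix.mul_assoc P, hPQ, Matrix.one_mul]

omit [DecidableEq κ] in
theorem mul_mul_mem_parabolicNilradical {P : Matrix κ ι F} {Q : Matrix ι κ F} (hQP : Q * P = 1)
    {W : Submodule F (ι → F)} {Y : Matrix ι ι F} (hY : Y ∈ parabolicNilradical W) :
    P * Y * Q ∈ parabolicNilradical (W.comap Q.mulVecLin) := by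
  refine ⟨fun x ↦ ?_, fun x hx ↦ ?_⟩
  · rw [Submodule.mem_comap, mulVecLin_apply, mulVec_mulVec, ← Matrix.mul_assoc, ← Matrix.mul_assoc,
      hQP, Matrix.one_mul, ← mulVec_mulVec]
    exact hY.1 _
  · rw [← mulVec_mulVec, ← mulVec_mulVec, hY.2 _ (by exact hx), mulVec_zero]

theorem exists_change_of_coordinates {W : Submodule F (ι → F)} (hW : W ≠ ⊤) :
    ∃ n j, n < Fintype.card ι ∧ ∃ (P : Matrix (Fin n ⊕ Fin j) ι F) (Q : Matrix ι (Fin n ⊕ Fin j) F),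
      P * Q = 1 ∧ Q * P = 1 ∧
      W = (LinearMap.ker (LinearMap.funLeft F F Sum.inr)).comap P.mulVecLin := by
  obtain ⟨C, hC⟩ := W.exists_isCompl
  let b := ((Module.finBasis F W).prod (Module.finBasis F C)).map
    (Submodule.prodEquivOfIsCompl W C hC)
  refine ⟨Module.finrank F W, Module.finrank F C, by simpa using Submodule.finrank_lt hW,
    b.toMatrix (Pi.basisFun F ι), (Pi.basisFun F ι).toMatrix b, b.toMatrix_mul_toMatrix_flip _,
    Module.Basis.toMatrix_mul_toMatrix_flip _ b, ?_⟩
  ext x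
  have mulVec_eq : b.toMatrix (Pi.basisFun F ι) *ᵥ x = b.repr x :=
    (Pi.basisFun F ι).toMatrix_mulVec_repr b x
  have inr_eq : LinearMap.funLeft F F Sum.inr (b.repr x) =
      (Module.finBasis F C).equivFun ((Submodule.prodEquivOfIsCompl W C hC).symm x).2 := by
    ext l
    simp [b, LinearMap.funLeft]
  rw [Submodule.mem_comap, mulVecLin_apply, mulVec_eq, LinearMap.mem_ker, inr_eq,
    LinearEquiv.map_eq_zero_iff, Submodule.prodEquivOfIsCompl_symm_apply_snd_eq_zero]

theorem shear_sub_one_mem_parabolicNilradical (X : Matrix κ (Fin j) F) :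
    shear X - 1 ∈
      parabolicNilradical (LinearMap.ker (LinearMap.funLeft F F (Sum.inr (α := κ)))) := by
  have h : shear X - 1 = fromBlocks 0 X 0 0 := by
    rw [← fromBlocks_one, shear, sub_eq_add_neg, fromBlocks_neg, fromBlocks_add]
    simp
  rw [h]
  refine ⟨fun x ↦ ?_, fun x hx ↦ ?_⟩
  · rw [LinearMap.mem_ker, fromBlocks_mulVec]
    ext i
    simp [LinearMap.funLeft]
  · rw [fromBlocks_mulVec, show x ∘ Sum.inr = 0 from hx]
    simp

theorem exists_one_add_eq_diagRight_mul_shear {J : Submodule F (Fin j → F)}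
    {N : Matrix (κ ⊕ Fin j) (κ ⊕ Fin j) F}
    (hN : N ∈ parabolicNilradical (J.comap (LinearMap.funLeft F F (Sum.inr (α := κ))))) :
    ∃ X, ∃ Y ∈ parabolicNilradical J, 1 + N = diagRight κ (1 + Y) * shear X := by
  obtain ⟨range_le, eq_zero⟩ := hN
  have left_eq_zero (i : κ) : N.col (Sum.inl i) = 0 := by
    rw [← mulVec_single_one]
    refine eq_zero _ ?_
    have h : LinearMap.funLeft F F Sum.inr (Pi.single (Sum.inl i) 1 : κ ⊕ Fin j → F) = 0 := by
      ext l
      simp [LinearMap.funLeft]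
    rw [Submodule.mem_comap, h]
    exact J.zero_mem
  have h₁₁ : N.toBlocks₁₁ = 0 := ext fun l i ↦ congrFun (left_eq_zero i) (Sum.inl l)
  have h₂₁ : N.toBlocks₂₁ = 0 := ext fun l i ↦ congrFun (left_eq_zero i) (Sum.inr l)
  have mulVec_toBlocks₂₂ (x : Fin j → F) :
      N.toBlocks₂₂ *ᵥ x = LinearMap.funLeft F F Sum.inr (N *ᵥ Sum.elim 0 x) := by
    conv_rhs => rw [← fromBlocks_toBlocks N, fromBlocks_mulVec]
    ext i
    simp [LinearMap.funLeft]
  refine ⟨N.toBlocks₁₂, N.toBlocks₂₂, ⟨fun x ↦ ?_, fun x hx ↦ ?_⟩, ?_⟩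
  · rw [mulVec_toBlocks₂₂]
    exact range_le _
  · rw [mulVec_toBlocks₂₂, eq_zero _ (by exact hx), map_zero]
  · conv_lhs => rw [← fromBlocks_toBlocks N, ← fromBlocks_one, fromBlocks_add, h₁₁, h₂₁]
    simp [diagRight, shear, fromBlocks_multiply]

end MaximalParabolic

section CuspidalReduction

variable {F K V : Type*} [Field F] [Field K] [AddCommGroup V] [Module K V]
  {ι : Type*} [Fintype ι] [DecidableEq ι] {D : Matrix ι ι F →* Module.End K V}

/-- The Jacquet module of `D` with respect to the parabolic subgroup stabilizing `W` is nonzero: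
some nonzero vector is fixed by its unipotent radical. -/
def HasFixedVector (D : Matrix ι ι F →* Module.End K V) (W : Submodule F (ι → F)) : Prop :=
  ∃ v ≠ 0, ∀ X ∈ parabolicNilradical W, D (1 + X) v = v

theorem exists_maximal_hasFixedVector [Nonempty ι] [Nontrivial V]
    (D : Matrix ι ι F →* Module.End K V) :
    ∃ W, Maximal (fun W ↦ W ≠ ⊤ ∧ HasFixedVector D W) W := by
  refine exists_maximal_of_wellFoundedGT _ ⟨⊥, bot_ne_top, ?_⟩
  obtain ⟨v, hv⟩ := exists_ne (0 : V)
  refine ⟨v, hv, fun X hX ↦ ?_⟩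
  have hX₀ : X = 0 := ext_of_mulVec_single fun i ↦ by
    rw [(Submodule.mem_bot F).1 (hX.1 _), zero_mulVec]
  rw [hX₀, add_zero, map_one, Module.End.one_apply]

variable {n j : ℕ} {P : Matrix (Fin n ⊕ Fin j) ι F} {Q : Matrix ι (Fin n ⊕ Fin j) F}

theorem shearInvariants_ne_bot_of_hasFixedVector (hPQ : P * Q = 1) (hQP : Q * P = 1)
    (hD : HasFixedVector D
      ((LinearMap.ker (LinearMap.funLeft F F Sum.inr)).comap P.mulVecLin)) :
    shearInvariants (D.comp (matrixConjEquiv P Q hPQ hQP).toMonoidHom) ≠ ⊥ := by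
  obtain ⟨v, hv₀, hv⟩ := hD
  refine (Submodule.ne_bot_iff _).2 ⟨v, mem_shearInvariants.2 fun X ↦ ?_, hv₀⟩
  have h : matrixConjEquiv P Q hPQ hQP (shear X) = 1 + Q * (shear X - 1) * P := by
    rw [Matrix.mul_sub, Matrix.sub_mul, Matrix.mul_one, hQP, add_sub_cancel]
    rfl
  change D (matrixConjEquiv P Q hPQ hQP (shear X)) v = v
  rw [h]
  exact hv _ (mul_mul_mem_parabolicNilradical hPQ (shear_sub_one_mem_parabolicNilradical X))

theorem hasFixedVector_comap (hPQ : P * Q = 1) (hQP : Q * P = 1) {J : Submodule F (Fin j → F)}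
    {v : shearInvariants (D.comp (matrixConjEquiv P Q hPQ hQP).toMonoidHom)} (hv₀ : v ≠ 0)
    (hv : ∀ X ∈ parabolicNilradical J, shearInvariantsHom _ (1 + X) v = v) :
    HasFixedVector D (J.comap (LinearMap.funLeft F F Sum.inr ∘ₗ P.mulVecLin)) := by
  refine ⟨v, by simpa using hv₀, fun Y hY ↦ ?_⟩
  have hPYQ := mul_mul_mem_parabolicNilradical (P := P) hQP hY
  have comap_comap : (J.comap (LinearMap.funLeft F F Sum.inr ∘ₗ P.mulVecLin)).comap Q.mulVecLin =
      J.comap (LinearMap.funLeft F F Sum.inr) := by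
    ext x
    simp [hPQ]
  rw [comap_comap] at hPYQ
  obtain ⟨X, Z, hZ, h⟩ := exists_one_add_eq_diagRight_mul_shear hPYQ
  have symm_apply : (matrixConjEquiv P Q hPQ hQP).symm (1 + Y) = 1 + P * Y * Q :=
    (congrArg (· * Q) (Matrix.mul_add P 1 Y)).trans <| by
      rw [Matrix.mul_one, Matrix.add_mul, hPQ]
  have conj_eq : matrixConjEquiv P Q hPQ hQP (diagRight (Fin n) (1 + Z) * shear X) = 1 + Y := by
    rw [← h, ← symm_apply, MulEquiv.apply_symm_apply]
  have hdiag := congrArg Subtype.val (hv Z hZ)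
  rw [coe_shearInvariantsHom_apply, MonoidHom.comp_apply] at hdiag
  have hshear := mem_shearInvariants.1 v.2 X
  rw [MonoidHom.comp_apply] at hshear
  rw [← conj_eq, map_mul, map_mul, Module.End.mul_apply]
  exact (congrArg _ hshear).trans hdiag

theorem isCuspidal_shearInvariantsHom_of_maximal (hPQ : P * Q = 1) (hQP : Q * P = 1)
    (hD : Maximal (fun W ↦ W ≠ ⊤ ∧ HasFixedVector D W)
      ((LinearMap.ker (LinearMap.funLeft F F Sum.inr)).comap P.mulVecLin)) :
    IsCuspidal (shearInvariantsHom (D.comp (matrixConjEquiv P Q hPQ hQP).toMonoidHom)) := by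
  intro J hJ hJ' v hv
  by_contra hv₀
  let f : (ι → F) →ₗ[F] (Fin j → F) := LinearMap.funLeft F F Sum.inr ∘ₗ P.mulVecLin
  have hf : Function.Surjective f :=
    (LinearMap.funLeft_surjective_of_injective F F _ Sum.inr_injective).comp
      (mulVec_surjective_iff_exists_right_inverse.2 ⟨Q, hPQ⟩)
  have comap_ne_top : J.comap f ≠ ⊤ := fun h ↦ hJ' <| by
    rw [← Submodule.map_comap_eq_of_surjective hf J, h, Submodule.map_top,
      LinearMap.range_eq_top.2 hf]
  have comap_le : J.comap f ≤ (LinearMap.ker (LinearMap.funLeft F F Sum.inr)).comap P.mulVecLin :=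
    hD.le_of_ge ⟨comap_ne_top, hasFixedVector_comap hPQ hQP hv₀ hv⟩
      (LinearMap.ker_le_comap (f := f))
  refine hJ <| (Submodule.eq_bot_iff J).2 fun y hy ↦ ?_
  obtain ⟨x, rfl⟩ := hf y
  exact comap_le hy

end CuspidalReduction

section SymmetricFormsGL

universe u

variable {F : Type*} [Field F] {K : Type u} [Field K]

theorem hasSymmetricForms_of_subsingleton {G : Type*} [Group G] [Subsingleton G] (s : G → G) :
    HasSymmetricForms K s := by
  intro V _ _ _ _ ρ
  obtain ⟨v, hv⟩ := exists_ne (0 : V)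
  obtain ⟨f, hf⟩ := Module.Projective.exists_dual_ne_zero K hv
  refine ⟨f.smulRight f, fun h ↦ hf ?_, fun g v w ↦ ?_, fun v w ↦ ?_⟩
  · simpa using LinearMap.congr_fun₂ h v v
  · rw [Subsingleton.elim g 1, Subsingleton.elim (s 1) 1, map_one, Module.End.one_apply,
      Module.End.one_apply]
  · simp [mul_comm]

variable {ι : Type*} [Fintype ι] [DecidableEq ι]

section ChangeOfCoordinates

variable {V : Type*} [AddCommGroup V] [Module K V] {κ : Type*} [Fintype κ] [DecidableEq κ]
  {P : Matrix κ ι F} {Q : Matrix ι κ F} {D : Matrix ι ι F →* Module.End K V}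
  {B : V →ₗ[K] V →ₗ[K] K}

theorem compl₂_gram_adjoint (hPQ : P * Q = 1) (hQP : Q * P = 1)
    (hB : ∀ M v w, B (D M v) w = B v (D Mᵀ w)) (N : Matrix κ κ F) (v w : V) :
    B.compl₂ (D (Pᵀ * P)) (D (matrixConjEquiv P Q hPQ hQP N) v) w =
      B.compl₂ (D (Pᵀ * P)) v (D (matrixConjEquiv P Q hPQ hQP Nᵀ) w) := by
  have hQP' : Qᵀ * Pᵀ = 1 := by rw [← transpose_mul, hPQ, transpose_one]
  have h : (Q * N * P)ᵀ * (Pᵀ * P) = Pᵀ * P * (Q * Nᵀ * P) :=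
    calc (Q * N * P)ᵀ * (Pᵀ * P)
      _ = Pᵀ * Nᵀ * (Qᵀ * Pᵀ) * P := by simp only [transpose_mul, Matrix.mul_assoc]
      _ = Pᵀ * (P * Q) * Nᵀ * P := by rw [hQP', hPQ, Matrix.mul_one, Matrix.mul_one]
      _ = Pᵀ * P * (Q * Nᵀ * P) := by simp only [Matrix.mul_assoc]
  change B (D (Q * N * P) v) (D (Pᵀ * P) w) = B v (D (Pᵀ * P) (D (Q * Nᵀ * P) w))
  rw [hB, ← Module.End.mul_apply, ← map_mul, h, map_mul, Module.End.mul_apply]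

omit [DecidableEq κ] in
theorem compl₂_gram_eq_neg (hB : ∀ M v w, B (D M v) w = B v (D Mᵀ w))
    (hskew : ∀ v w, B v w = -B w v) (v w : V) :
    B.compl₂ (D (Pᵀ * P)) v w = -B.compl₂ (D (Pᵀ * P)) w v := by
  rw [LinearMap.compl₂_apply, LinearMap.compl₂_apply, hskew, hB, transpose_mul,
    transpose_transpose]

theorem injective_compl₂_gram (hPQ : P * Q = 1) (hQP : Q * P = 1) (hB : Function.Injective B) :
    Function.Injective (B.compl₂ (D (Pᵀ * P))) := by
  have hPQ' : Pᵀ * Qᵀ = 1 := by rw [← transpose_mul, hQP, transpose_one]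
  have gram_mul : Pᵀ * P * (Q * Qᵀ) = 1 := by
    rw [Matrix.mul_assoc, ← Matrix.mul_assoc P, hPQ, Matrix.one_mul, hPQ']
  refine fun v v' h ↦ hB (LinearMap.ext fun w ↦ ?_)
  have hw : D (Pᵀ * P) (D (Q * Qᵀ) w) = w := by
    rw [← Module.End.mul_apply, ← map_mul, gram_mul, map_one, Module.End.one_apply]
  simpa [hw] using LinearMap.congr_fun h (D (Q * Qᵀ) w)

end ChangeOfCoordinates

theorem noSkewForms_glTranspose [Finite F] [CharZero K] [IsAlgClosed K] [Nonempty ι]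
    {ψ : AddChar F K} (hψ : ψ ≠ 1)
    (ih : ∀ n < Fintype.card ι, HasSymmetricForms K (glTranspose (F := F) (ι := Fin n))) :
    NoSkewForms K (glTranspose (F := F) (ι := ι)) := by
  intro V _ _ _ ρ hρ B hB hskew
  by_contra hB₀
  have : Nontrivial V := nontrivial_of_isIrreducible ρ
  let D := extendByZero ρ
  have hBD (M : Matrix ι ι F) (v w : V) : B (D M v) w = B v (D Mᵀ w) := by
    by_cases hM : IsUnit M
    · obtain ⟨g, rfl⟩ := hM
      rw [extendByZero_coe, hB, ← coe_glTranspose, extendByZero_coe]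
    · have hM' : ¬ IsUnit Mᵀ := by rwa [isUnit_transpose]
      rw [extendByZero_of_not_isUnit ρ hM, extendByZero_of_not_isUnit ρ hM']
      simp
  obtain ⟨W, hW⟩ := exists_maximal_hasFixedVector D
  obtain ⟨n, j, hn, P, Q, hPQ, hQP, rfl⟩ := exists_change_of_coordinates hW.prop.1
  let e := matrixConjEquiv P Q hPQ hQP
  have hspan : Submodule.span K (Set.range (D.comp e.toMonoidHom)) = ⊤ := by
    refine top_unique (span_range_eq_top_of_isIrreducible (ρ := ρ).symm.le.trans ?_)
    refine Submodule.span_mono ?_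
    rintro _ ⟨g, rfl⟩
    exact ⟨e.symm g, by
      rw [← extendByZero_coe ρ g]
      exact congrArg D (e.apply_symm_apply _)⟩
  refine not_injective_of_isCuspidal_shearInvariantsHom
    (ih n hn) (fun M hM ↦ extendByZero_of_not_isUnit ρ (mt (MulEquiv.isUnit_map e).1 hM)) hspan
    (shearInvariants_ne_bot_of_hasFixedVector hPQ hQP hW.prop.2)
    (isCuspidal_shearInvariantsHom_of_maximal hPQ hQP hW) hψ
    (compl₂_gram_adjoint hPQ hQP hBD) (compl₂_gram_eq_neg hBD hskew)
    (injective_compl₂_gram hPQ hQP (hB.injective hB₀))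

theorem hasSymmetricForms_glTranspose [Finite F] [CharZero K] [IsAlgClosed K]
    {ψ : AddChar F K} (hψ : ψ ≠ 1) (n : ℕ) :
    HasSymmetricForms K (glTranspose (F := F) (ι := Fin n)) := by
  induction n using Nat.strong_induction_on with | _ n ih =>
  obtain rfl | hn := n.eq_zero_or_pos
  · exact hasSymmetricForms_of_subsingleton _
  · have := Fin.pos_iff_nonempty.1 hn
    refine NoSkewForms.hasSymmetricForms (noSkewForms_glTranspose hψ fun m hm ↦ ih m ?_)
      isAntiInvolution_glTranspose isConj_glTranspose
    rwa [Fintype.card_fin] at hm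

end SymmetricFormsGL

section Wedderburn

variable {K G V : Type*} [Field K] [Group G] [AddCommGroup V] [Module K V]

theorem isIrreducible_of_asAlgebraHom_surjective [Nontrivial V] {ρ : Representation K G V}
    (hρ : Function.Surjective ρ.asAlgebraHom) : ρ.IsIrreducible := by
  refine isIrreducible_of_forall_submodule fun W hW ↦ or_iff_not_imp_left.2 fun hW₀ ↦ ?_
  have asAlgebraHom_mem (a : MonoidAlgebra K G) : ∀ w ∈ W, ρ.asAlgebraHom a w ∈ W := by
    induction a using MonoidAlgebra.induction_on with
    | of g => exact fun w hw ↦ by simpa using hW g hw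
    | add a b ha hb => exact fun w hw ↦ by simpa using add_mem (ha w hw) (hb w hw)
    | smul c a ha => exact fun w hw ↦ by simpa using W.smul_mem c (ha w hw)
  obtain ⟨w, hw, hw₀⟩ := W.ne_bot_iff.1 hW₀
  obtain ⟨f, hf⟩ := Module.Projective.exists_dual_ne_zero K hw₀
  refine eq_top_iff.2 fun v _ ↦ ?_
  obtain ⟨a, ha⟩ := hρ (f.smulRight ((f w)⁻¹ • v))
  simpa [ha, hf] using asAlgebraHom_mem a w hw

variable {ι : Type*} {d : ι → ℕ}

/-- The representation of `G` on the column vectors of the `i`-th block of a Wedderburn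
decomposition `φ` of its group algebra. -/
noncomputable def blockRepresentation
    (φ : MonoidAlgebra K G ≃ₐ[K] ((i : ι) → Matrix (Fin (d i)) (Fin (d i)) K)) (i : ι) :
    Representation K G (Fin (d i) → K) :=
  (MonoidAlgebra.lift K (Module.End K (Fin (d i) → K)) G).symm
    ((Matrix.toLinAlgEquiv'.toAlgHom.comp (Pi.evalAlgHom K _ i)).comp φ.toAlgHom)

variable (φ : MonoidAlgebra K G ≃ₐ[K] ((i : ι) → Matrix (Fin (d i)) (Fin (d i)) K))

theorem asAlgebraHom_blockRepresentation (i : ι) (a : MonoidAlgebra K G) :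
    (blockRepresentation φ i).asAlgebraHom a = (φ a i).toLin' :=
  DFunLike.congr_fun ((MonoidAlgebra.lift K (Module.End K (Fin (d i) → K)) G).apply_symm_apply _) a

theorem blockRepresentation_apply (i : ι) (g : G) :
    blockRepresentation φ i g = (φ (MonoidAlgebra.of K G g) i).toLin' := by
  rw [← asAlgebraHom_blockRepresentation, Representation.asAlgebraHom_of]

theorem isIrreducible_blockRepresentation (i : ι) [NeZero (d i)] :
    (blockRepresentation φ i).IsIrreducible := by
  classical
  refine isIrreducible_of_asAlgebraHom_surjective fun f ↦ ⟨φ.symm (Pi.single i f.toMatrix'), ?_⟩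
  rw [asAlgebraHom_blockRepresentation, AlgEquiv.apply_symm_apply, Pi.single_eq_same,
    Matrix.toLin'_toMatrix']

theorem trace_asAlgebraHom_eq_of_character_eq {W : Type*} [AddCommGroup W] [Module K W]
    {ρ : Representation K G V} {τ : Representation K G W} (h : ρ.character = τ.character)
    (a : MonoidAlgebra K G) :
    LinearMap.trace K V (ρ.asAlgebraHom a) = LinearMap.trace K W (τ.asAlgebraHom a) := by
  induction a using MonoidAlgebra.induction_on with
  | of g =>
    rw [Representation.asAlgebraHom_of, Representation.asAlgebraHom_of]
    exact congrFun h g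
  | add a b ha hb => simp [ha, hb]
  | smul c a ha => simp [ha]

theorem character_blockRepresentation_injective [CharZero K] [∀ i, NeZero (d i)] :
    Function.Injective fun i ↦ (blockRepresentation φ i).character := by
  classical
  intro i j hij
  by_contra hne
  have h := trace_asAlgebraHom_eq_of_character_eq hij (φ.symm (Pi.single i 1))
  rw [asAlgebraHom_blockRepresentation, asAlgebraHom_blockRepresentation, φ.apply_symm_apply,
    Pi.single_eq_same, Pi.single_eq_of_ne (Ne.symm hne)] at h
  simp [NeZero.ne] at h

theorem exists_single_single_ne_zero {A : ((i : ι) → Matrix (Fin (d i)) (Fin (d i)) K) →ₗ[K] V}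
    [Finite ι] [DecidableEq ι] (hA : A ≠ 0) :
    ∃ i a b, A (Pi.single i (Matrix.single a b 1)) ≠ 0 := by
  by_contra! h
  refine hA (LinearMap.pi_ext' fun i ↦ Matrix.ext_linearMap K fun a b ↦ ?_)
  ext
  exact h i a b

theorem exists_character_blockRepresentation_eq [Finite ι] [∀ i, NeZero (d i)]
    (τ : Representation K G V) [τ.IsIrreducible] :
    ∃ i, (blockRepresentation φ i).character = τ.character := by
  classical
  have : Nontrivial V := nontrivial_of_isIrreducible τ
  obtain ⟨v, hv⟩ := exists_ne (0 : V)
  let A : ((i : ι) → Matrix (Fin (d i)) (Fin (d i)) K) →ₗ[K] V :=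
    LinearMap.applyₗ v ∘ₗ τ.asAlgebraHom.toLinearMap ∘ₗ φ.symm.toLinearMap
  have hA (g : G) (M) : A (φ (MonoidAlgebra.of K G g) * M) = τ g (A M) := by
    simp [A]
  have hA₀ : A ≠ 0 := fun h ↦ hv <| by simpa [A] using LinearMap.congr_fun h 1
  obtain ⟨i, a, b, hab⟩ := exists_single_single_ne_zero hA₀
  have := isIrreducible_blockRepresentation φ i
  let f : (blockRepresentation φ i).IntertwiningMap τ :=
    { toLinearMap := A ∘ₗ LinearMap.single K _ i ∘ₗ
        (vecMulVecBilin K K).flip (Pi.single b 1)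
      isIntertwining' := fun g ↦ by
        refine LinearMap.ext fun w ↦ ?_
        simp only [LinearMap.comp_apply, ← hA, blockRepresentation_apply]
        congr 1
        change Pi.single i (vecMulVec (φ (MonoidAlgebra.of K G g) i *ᵥ w) (Pi.single b 1)) =
          φ (MonoidAlgebra.of K G g) * Pi.single i (vecMulVec w (Pi.single b 1))
        rw [← Matrix.mul_vecMulVec, Pi.single_mul_right] }
  have hf : f ≠ 0 := fun h ↦ hab <| by
    have := DFunLike.congr_fun h (Pi.single a 1)
    rw [Matrix.single_eq_single_vecMulVec_single]
    exact this
  have hf_bij := (Representation.IsIrreducible.bijective_or_eq_zero f).resolve_right hf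
  exact ⟨i, Representation.char_iso (f.ofBijective hf_bij)⟩

end Wedderburn

section Trace

theorem trace_eq_card_fixedPoints_of_basis {ι K V : Type*} [Finite ι] [CommRing K]
    [AddCommGroup V] [Module K V] (b : Module.Basis ι K V) {s : ι → ι} {f : V →ₗ[K] V}
    (hf : ∀ i, f (b i) = b (s i)) :
    LinearMap.trace K V f = Nat.card {i // s i = i} := by
  classical
  have := Fintype.ofFinite ι
  simp [LinearMap.trace_eq_matrix_trace K b, Matrix.trace, LinearMap.toMatrix_apply, hf,
    Finsupp.single_apply, Fintype.card_subtype]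

theorem trace_mul_transpose_mul {K n : Type*} [CommRing K] [Fintype n] (S T : Matrix n n K) :
    LinearMap.trace K _ (LinearMap.mulLeft K T ∘ₗ LinearMap.mulRight K S ∘ₗ
      (Matrix.transposeLinearEquiv n n K K).toLinearMap) = (T * Sᵀ).trace := by
  classical
  rw [LinearMap.trace_eq_matrix_trace K (Matrix.stdBasis K n n)]
  have stdBasis_repr (M : Matrix n n K) (i j : n) : (Matrix.stdBasis K n n).repr M (i, j) = M i j :=
    rfl
  simp [Matrix.trace, LinearMap.toMatrix_apply, Fintype.sum_prod_type, stdBasis_repr,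
    Matrix.stdBasis_eq_single, Matrix.mul_apply, Matrix.single_apply, ite_and]

theorem trace_piMap {ι K : Type*} [Fintype ι] [Field K] {V : ι → Type*} [∀ i, AddCommGroup (V i)]
    [∀ i, Module K (V i)] [∀ i, FiniteDimensional K (V i)] (f : ∀ i, V i →ₗ[K] V i) :
    LinearMap.trace K _ (LinearMap.piMap f) = ∑ i, LinearMap.trace K _ (f i) := by
  classical
  let b i := Module.finBasis K (V i)
  simp [LinearMap.trace_eq_matrix_trace K (Pi.basis b),
    LinearMap.trace_eq_matrix_trace K (b _), Matrix.trace, LinearMap.toMatrix_apply,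
    Fintype.sum_sigma]

end Trace

section CharacterDegrees

universe u

variable {K G : Type u} [Field K] [Group G]

/-- The characters of the irreducible representations of `G` over `K`. -/
def irreducibleCharacters (K G : Type u) [Field K] [Group G] : Set (G → K) :=
  {χ | ∃ V : FDRep K G, Simple V ∧ χ = V.character}

theorem simple_fdRep_of [CharZero K] [IsAlgClosed K] [Finite G] {V : Type u} [AddCommGroup V]
    [Module K V] [FiniteDimensional K V] (ρ : Representation K G V) [ρ.IsIrreducible] :
    Simple (FDRep.of ρ) := by
  have := Fintype.ofFinite G
  have hG : (Nat.card G : K) ≠ 0 := Nat.cast_ne_zero.2 Nat.card_pos.ne'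
  have := invertibleOfNonzero hG
  have h := Representation.char_orthonormal ρ ρ
  rw [if_pos ⟨.refl ρ⟩, inv_mul_eq_one₀ hG] at h
  exact (FDRep.simple_iff_char_is_norm_one (FDRep.of ρ)).2 h.symm

theorem exists_isIrreducible_character_eq [CharZero K] [IsAlgClosed K] [Finite G] (V : FDRep K G)
    [Simple V] :
    ∃ (W : Submodule K V) (hW : ∀ g, W ≤ W.comap (V.ρ g)),
      (Representation.quotient V.ρ W hW).IsIrreducible ∧
        V.character = (Representation.quotient V.ρ W hW).character := by
  have : Nontrivial V := not_subsingleton_iff_nontrivial.1 fun _ ↦ id_nonzero V <| by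
    ext v
    exact Subsingleton.elim _ _
  obtain ⟨W, hW, hρ⟩ := exists_isIrreducible_quotient V.ρ
  refine ⟨W, hW, hρ, ?_⟩
  have := simple_fdRep_of (Representation.quotient V.ρ W hW)
  have : Nontrivial (V ⧸ W) := nontrivial_of_isIrreducible (Representation.quotient V.ρ W hW)
  let π : V ⟶ FDRep.of (Representation.quotient V.ρ W hW) :=
    ⟨InducedCategory.homMk (ModuleCat.ofHom W.mkQ), fun g ↦ by ext1; ext v; rfl⟩
  have hπ : π ≠ 0 := fun h ↦ by
    obtain ⟨x, hx⟩ := exists_ne (0 : V ⧸ W)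
    obtain ⟨v, rfl⟩ := W.mkQ_surjective x
    exact hx (congrArg (fun f ↦ f.hom.hom.hom v) h)
  have := isIso_of_hom_simple hπ
  exact FDRep.char_iso (asIso π)

variable {ι : Type*} {d : ι → ℕ}

theorem irreducibleCharacters_eq_range [CharZero K] [IsAlgClosed K] [Finite G]
    [∀ i, NeZero (d i)] [Finite ι]
    (φ : MonoidAlgebra K G ≃ₐ[K] ((i : ι) → Matrix (Fin (d i)) (Fin (d i)) K)) :
    irreducibleCharacters K G = Set.range fun i ↦ (blockRepresentation φ i).character := by
  refine Set.Subset.antisymm ?_ ?_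
  · rintro _ ⟨V, _, rfl⟩
    obtain ⟨W, hW, hρ, hχ⟩ := exists_isIrreducible_character_eq V
    obtain ⟨i, hi⟩ := exists_character_blockRepresentation_eq φ (Representation.quotient V.ρ W hW)
    exact ⟨i, hi.trans hχ.symm⟩
  · rintro _ ⟨i, rfl⟩
    have := isIrreducible_blockRepresentation φ i
    exact ⟨FDRep.of (blockRepresentation φ i), simple_fdRep_of _, rfl⟩

theorem finsum_irreducibleCharacters_one [CharZero K] [IsAlgClosed K] [Finite G]
    [∀ i, NeZero (d i)] [Fintype ι]
    (φ : MonoidAlgebra K G ≃ₐ[K] ((i : ι) → Matrix (Fin (d i)) (Fin (d i)) K)) :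
    ∑ᶠ χ ∈ irreducibleCharacters K G, χ 1 = ∑ i, (d i : K) := by
  rw [irreducibleCharacters_eq_range φ,
    finsum_mem_range (character_blockRepresentation_injective φ), finsum_eq_sum_of_fintype]
  simp [Representation.char_one]

theorem HasSymmetricForms.exists_gram_matrix {s : G → G} (h : HasSymmetricForms K s) {n : ℕ}
    [NeZero n] (ρ : Representation K G (Fin n → K)) [ρ.IsIrreducible] :
    ∃ S : Matrix (Fin n) (Fin n) K, IsUnit S ∧ Sᵀ = S ∧
      ∀ g, (ρ g).toMatrix'ᵀ * S = S * (ρ (s g)).toMatrix' := by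
  obtain ⟨B, hB₀, hB, hsymm⟩ := h _ ρ
  refine ⟨LinearMap.toMatrix₂' K B, ?_, ?_, fun g ↦ ?_⟩
  · rw [Matrix.isUnit_iff_isUnit_det, isUnit_iff_ne_zero, ← Matrix.separatingLeft_iff_det_ne_zero,
      LinearMap.separatingLeft_toMatrix₂'_iff, LinearMap.separatingLeft_iff_ker_eq_bot]
    exact LinearMap.ker_eq_bot.2 (hB.injective hB₀)
  · ext a b
    exact hsymm _ _
  · rw [← LinearMap.toMatrix₂'_comp, ← LinearMap.toMatrix₂'_compl₂]
    exact congrArg _ (LinearMap.ext₂ (hB g))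

theorem HasSymmetricForms.sum_degree_eq_card [Fintype ι] [Finite G] {s : G → G}
    (h : HasSymmetricForms K s) [∀ i, NeZero (d i)]
    (φ : MonoidAlgebra K G ≃ₐ[K] ((i : ι) → Matrix (Fin (d i)) (Fin (d i)) K)) :
    ∑ i, (d i : K) = Nat.card {g : G // s g = g} := by
  have (i : ι) := isIrreducible_blockRepresentation φ i
  choose S hS hS_symm hSg using fun i ↦ h.exists_gram_matrix (blockRepresentation φ i)
  let θ (i : ι) : Matrix (Fin (d i)) (Fin (d i)) K →ₗ[K] Matrix (Fin (d i)) (Fin (d i)) K :=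
    LinearMap.mulLeft K (S i)⁻¹ ∘ₗ LinearMap.mulRight K (S i) ∘ₗ
      (Matrix.transposeLinearEquiv _ _ K K).toLinearMap
  have trace_θ (i : ι) : LinearMap.trace K _ (θ i) = d i := by
    rw [trace_mul_transpose_mul, hS_symm, Matrix.nonsing_inv_mul _
      ((Matrix.isUnit_iff_isUnit_det _).1 (hS i)), Matrix.trace_one, Fintype.card_fin]
  let b := (MonoidAlgebra.basis G K).map φ.toLinearEquiv
  have θ_basis (g : G) : LinearMap.piMap θ (b g) = b (s g) := by
    have hb (g : G) (i : ι) : b g i = (blockRepresentation φ i g).toMatrix' := by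
      simp [b, blockRepresentation_apply]
    funext i
    rw [LinearMap.coe_piMap, Pi.map_apply, hb]
    change (S i)⁻¹ * ((blockRepresentation φ i g).toMatrix'ᵀ * S i) = _
    rw [hb, hSg, Matrix.nonsing_inv_mul_cancel_left _ _ ((Matrix.isUnit_iff_isUnit_det _).1 (hS i))]
  rw [← trace_eq_card_fixedPoints_of_basis b θ_basis, trace_piMap]
  exact Finset.sum_congr rfl fun i _ ↦ (trace_θ i).symm

theorem HasSymmetricForms.finsum_irreducibleCharacters_one [CharZero K] [IsAlgClosed K] [Finite G]
    {s : G → G} (h : HasSymmetricForms K s) :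
    ∑ᶠ χ ∈ irreducibleCharacters K G, χ 1 = Nat.card {g : G // s g = g} := by
  have : NeZero (Nat.card G : K) := ⟨Nat.cast_ne_zero.2 Nat.card_pos.ne'⟩
  have : FiniteDimensional K (MonoidAlgebra K G) := .of_basis (MonoidAlgebra.basis G K)
  obtain ⟨n, d, _, ⟨φ⟩⟩ :=
    IsSemisimpleRing.exists_algEquiv_pi_matrix_of_isAlgClosed K (MonoidAlgebra K G)
  rw [_root_.finsum_irreducibleCharacters_one φ, h.sum_degree_eq_card φ]

end CharacterDegrees

theorem exists_addChar_ne_one (F K : Type*) [Field F] [Finite F] [Field K] [CharZero K]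
    [IsAlgClosed K] : ∃ ψ : AddChar F K, ψ ≠ 1 := by
  have : NeZero (Monoid.exponent (Multiplicative F)) := ⟨Monoid.exponent_ne_zero_of_finite⟩
  obtain ⟨φ, hφ⟩ := CommGroup.exists_apply_ne_one_of_hasEnoughRootsOfUnity (Multiplicative F) K
    (a := .ofAdd 1) (ofAdd_eq_one.not.2 one_ne_zero)
  refine ⟨AddChar.toMonoidHomEquiv.symm ((Units.coeHom K).comp φ), AddChar.ne_one_iff.2 ⟨1, ?_⟩⟩
  simpa using hφ

theorem gow_sum_of_character_degrees_general.{u} (K F : Type u) [Field K] [CharZero K]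
    [IsAlgClosed K] [Field F] [Finite F] (k : ℕ) :
    ∑ᶠ χ ∈ irreducibleCharacters K (GL (Fin k) F), χ 1 =
      Nat.card {M : GL (Fin k) F // (M : Matrix (Fin k) (Fin k) F)ᵀ = M} := by
  obtain ⟨ψ, hψ⟩ := exists_addChar_ne_one F K
  refine (hasSymmetricForms_glTranspose hψ k).finsum_irreducibleCharacters_one.trans ?_
  simp only [Units.ext_iff, coe_glTranspose]

/-- Gow's theorem: for an odd prime power `q` (realized as the cardinality of a finite field
`F`), the sum of the degrees `χ(1)` of the irreducible complex characters of `GL_k(F_q)`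
equals the number of symmetric matrices in `GL_k(F_q)`. -/
theorem gow_sum_of_character_degrees (q k : ℕ) (F : Type) [Field F] [Fintype F]
    (hF : Fintype.card F = q) (hq : Odd q) :
    (∑ᶠ χ ∈ {f : Matrix.GeneralLinearGroup (Fin k) F → ℂ |
        ∃ V : FDRep ℂ (Matrix.GeneralLinearGroup (Fin k) F), Simple V ∧ f = FDRep.character V},
      χ 1) =
      (Nat.card {M : Matrix.GeneralLinearGroup (Fin k) F //
        (M : Matrix (Fin k) (Fin k) F).transpose = (M : Matrix (Fin k) (Fin k) F)} : ℂ) := by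
  exact gow_sum_of_character_degrees_general ℂ F k
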